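/- arXiv:1203.0042 — 2 statements merged into one kernel-verified Lean document; each statement's English description precedes it below -/
import Mathlib

section
/- Let μ ∈ ℂ∖{0}, η ∈ ℂ and k ≥ 1 an integer. Then the complex vector space V_k(μ) has dimension 4k, and every g ∈ V_k(μ) can be written as g(z) = c·∏_{i=1}^{4k} θ(z+a_i−ν) / P_k(η,z) for some c ∈ ℂ and a ∈ ℂ^{4k} with a₁+⋯+a_{4k} = 2k(k−1)η, where ν is the unique complex number with exp(8iπν) = μ and Re ν ∈ [0,1/4). -/
open Complex Filter

noncomputable section

/-- The Jacobi theta function `θ₁(z|τ)`. -/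
def θ (τ z : ℂ) : ℂ :=
  I * ∑' n : ℤ, (-1 : ℂ) ^ n * Complex.exp (Real.pi * I * τ * ((n : ℂ) - 1/2) ^ 2) *
    Complex.exp (Real.pi * I * (2 * (n : ℂ) - 1) * z)

/-- `P_k(η,z) = ∏_{ℓ=0}^{k-1} θ(2z+2ℓη)`. -/
def Pk (τ η : ℂ) (k : ℕ) (z : ℂ) : ℂ :=
  ∏ ℓ ∈ Finset.range k, θ τ (2 * z + 2 * (ℓ : ℂ) * η)

/-- Membership in the space `V_k(μ)`: meromorphic on `ℂ`, with `g(z+1)=g(z)`,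
`g(z+τ)=μ^k g(z)`, and such that `g·P_k(η,·)` extends to an entire function. -/
def memVk (τ μ η : ℂ) (k : ℕ) (g : ℂ → ℂ) : Prop :=
  MeromorphicOn g Set.univ ∧ (∀ z, g (z + 1) = g z) ∧ (∀ z, g (z + τ) = μ ^ k * g z) ∧
  ∃ h : ℂ → ℂ, Differentiable ℂ h ∧ ∀ z, Pk τ η k z ≠ 0 → g z * Pk τ η k z = h z


section Lattice

lemma iff_add_lattice {τ : ℂ} {P : ℂ → Prop} (h1 : ∀ z, P (z + 1) ↔ P z)
    (hτ : ∀ z, P (z + τ) ↔ P z) (m n : ℤ) (z : ℂ) : P (z + m + n * τ) ↔ P z := by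
  have key : ∀ w : ℂ, (∀ z, P (z + w) ↔ P z) → ∀ (k : ℤ) (z : ℂ), P (z + k * w) ↔ P z := by
    intro w hw k
    induction k with
    | zero => simp
    | succ i ih =>
      intro z
      rw [← ih z, ← hw (z + ((i : ℤ) : ℂ) * w)]
      push_cast
      ring_nf
    | pred i ih =>
      intro z
      rw [← ih z, ← hw (z + ((-(i : ℤ) - 1 : ℤ) : ℂ) * w)]
      push_cast
      ring_nf
  rw [key τ hτ n (z + m)]
  simpa using key 1 h1 m z

lemma eq_const_of_norm_periodic {τ : ℂ} (hτ : 0 < τ.im) {f : ℂ → ℂ} (hf : Differentiable ℂ f)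
    (h1 : ∀ z, ‖f (z + 1)‖ = ‖f z‖) (h2 : ∀ z, ‖f (z + τ)‖ = ‖f z‖) : ∃ c, ∀ z, f z = c := by
  apply hf.exists_const_forall_eq_of_bounded
  have hcomp : IsCompact ((fun p : ℝ × ℝ => ‖f (p.1 + p.2 * τ)‖) ''
      (Set.Icc 0 1 ×ˢ Set.Icc 0 1)) := by
    apply (isCompact_Icc.prod isCompact_Icc).image
    have := hf.continuous
    fun_prop
  obtain ⟨C, hC⟩ := hcomp.bddAbove
  refine _root_.isBounded_iff_forall_norm_le.mpr ⟨C, ?_⟩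
  rintro _ ⟨z, rfl⟩
  set y : ℝ := z.im / τ.im
  set x : ℝ := z.re - y * τ.re
  have hz : z = x + y * τ := by
    apply Complex.ext
    · simp [x]
    · simp [y, hτ.ne']
  have hinv := (iff_add_lattice (τ := τ) (P := fun w => ‖f w‖ ≤ C) (fun z => by simp only [h1])
    (fun z => by simp only [h2]) ⌊x⌋ ⌊y⌋ (Int.fract x + Int.fract y * τ : ℂ)).mpr
    (hC ⟨(Int.fract x, Int.fract y), ⟨⟨Int.fract_nonneg _, (Int.fract_lt_one _).le⟩,
      ⟨Int.fract_nonneg _, (Int.fract_lt_one _).le⟩⟩, rfl⟩)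
  have hx : (x : ℂ) = Int.fract x + ⌊x⌋ := by exact_mod_cast (Int.fract_add_floor x).symm
  have hy : (y : ℂ) = Int.fract y + ⌊y⌋ := by exact_mod_cast (Int.fract_add_floor y).symm
  have hfz : z = Int.fract x + Int.fract y * τ + ⌊x⌋ + ⌊y⌋ * τ := by
    linear_combination hz + hx + τ * hy
  rwa [hfz]

end Lattice

section Entire

lemma differentiable_dslope {f : ℂ → ℂ} (hf : Differentiable ℂ f) (a : ℂ) :
    Differentiable ℂ (dslope f a) := by
  rw [← differentiableOn_univ] at hf ⊢
  exact (Complex.differentiableOn_dslope Filter.univ_mem).mpr hf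

/-- An entire function vanishing at the zeros of an entire function with simple zeros
is divisible by it. -/
lemma exists_entire_quotient {f p : ℂ → ℂ} (hf : Differentiable ℂ f) (hp : Differentiable ℂ p)
    (hsimple : ∀ z, p z = 0 → deriv p z ≠ 0) (hzero : ∀ z, p z = 0 → f z = 0) :
    ∃ g : ℂ → ℂ, Differentiable ℂ g ∧ ∀ z, f z = p z * g z := by
  classical
  refine ⟨fun z => if p z = 0 then deriv f z / deriv p z else f z / p z, fun a => ?_, fun z => ?_⟩
  · by_cases ha : p a = 0
    · have hd : dslope p a a ≠ 0 := by rw [dslope_same]; exact hsimple a ha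
      have hq : DifferentiableAt ℂ (fun z => dslope f a z / dslope p a z) a :=
        (differentiable_dslope hf a a).div (differentiable_dslope hp a a) hd
      refine hq.congr_of_eventuallyEq ?_
      filter_upwards [(differentiable_dslope hp a).continuous.continuousAt.eventually_ne hd]
        with z hz
      rcases eq_or_ne z a with rfl | hza
      · simp [ha, dslope_same]
      · have e1 : p z = (z - a) * dslope p a z := by
          simpa [ha] using (sub_smul_dslope p a z).symm
        have e2 : f z = (z - a) * dslope f a z := by
          simpa [hzero a ha] using (sub_smul_dslope f a z).symm
        have h0 : p z ≠ 0 := by rw [e1]; exact mul_ne_zero (sub_ne_zero.mpr hza) hz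
        rw [if_neg h0, e1, e2, mul_div_mul_left _ _ (sub_ne_zero.mpr hza)]
    · have hq : DifferentiableAt ℂ (fun z => f z / p z) a := (hf a).div (hp a) ha
      refine hq.congr_of_eventuallyEq ?_
      filter_upwards [hp.continuous.continuousAt.eventually_ne ha] with z hz
      rw [if_neg hz]
  · by_cases hz : p z = 0
    · simp [hz, hzero z hz]
    · simp [hz, mul_div_cancel₀]

lemma eq_of_eq_off_countable {p u v : ℂ → ℂ} (hp : {z | p z = 0}.Countable) (hu : Continuous u)
    (hv : Continuous v) (h : ∀ z, p z ≠ 0 → u z = v z) (z : ℂ) : u z = v z := by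
  have hd : Dense {z | p z = 0}ᶜ := hp.dense_compl ℂ
  exact congrFun (Continuous.ext_on hd hu hv fun z hz => h z hz) z

end Entire

section EulerProduct

/-- The product `∏_{n ≥ 0} (1 - exp (2πi (z + nτ)))`. -/
def halfProd (τ z : ℂ) : ℂ :=
  ∏' n : ℕ, (1 + -Complex.exp (2 * Real.pi * I * (z + n * τ)))

lemma norm_halfProd_term (τ z : ℂ) (n : ℕ) :
    ‖-Complex.exp (2 * Real.pi * I * (z + n * τ))‖ =
      Real.exp (-2 * Real.pi * z.im) * Real.exp (-2 * Real.pi * τ.im) ^ n := by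
  rw [norm_neg, Complex.norm_exp, ← Real.exp_nat_mul, ← Real.exp_add]
  congr 1
  simp
  ring

lemma summable_halfProd_bound {τ : ℂ} (hτ : 0 < τ.im) (C : ℝ) :
    Summable fun n : ℕ => C * Real.exp (-2 * Real.pi * τ.im) ^ n := by
  refine (summable_geometric_of_lt_one (Real.exp_pos _).le ?_).mul_left _
  rw [Real.exp_lt_one_iff]
  have := mul_pos Real.pi_pos hτ
  linarith

lemma summable_halfProd_term {τ : ℂ} (hτ : 0 < τ.im) (z : ℂ) :
    Summable fun n : ℕ => ‖-Complex.exp (2 * Real.pi * I * (z + n * τ))‖ := by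
  simp only [norm_halfProd_term]
  exact summable_halfProd_bound hτ _

lemma differentiable_halfProd {τ : ℂ} (hτ : 0 < τ.im) : Differentiable ℂ (halfProd τ) := by
  intro z
  have hU : IsOpen {w : ℂ | z.im - 1 < w.im} := isOpen_lt continuous_const Complex.continuous_im
  have hprod := (summable_halfProd_bound hτ
    (Real.exp (-2 * Real.pi * (z.im - 1)))).hasProdLocallyUniformlyOn_nat_one_add
    (f := fun (n : ℕ) w => -Complex.exp (2 * Real.pi * I * (w + n * τ))) hU
    (.of_forall fun n w hw => by
      rw [norm_halfProd_term]
      refine mul_le_mul_of_nonneg_right (Real.exp_le_exp.mpr ?_) (by positivity)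
      have := mul_le_mul_of_nonneg_left (le_of_lt hw) Real.pi_pos.le
      linarith) (fun n => by fun_prop)
  refine (TendstoLocallyUniformlyOn.differentiableOn hprod (.of_forall fun s => ?_) hU
    ).differentiableAt (hU.mem_nhds (by simp))
  exact (Differentiable.fun_finsetProd fun n _ => by fun_prop).differentiableOn

lemma halfProd_eq_mul {τ : ℂ} (hτ : 0 < τ.im) (z : ℂ) :
    halfProd τ z = (1 - Complex.exp (2 * Real.pi * I * z)) * halfProd τ (z + τ) := by
  have hterm : ∀ n : ℕ, z + ((n + 1 : ℕ) : ℂ) * τ = z + τ + n * τ := fun n => by push_cast; ring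
  rw [halfProd, tprod_eq_zero_mul']
  · simp only [hterm, halfProd]
    simp [sub_eq_add_neg]
  · simp only [hterm]
    exact multipliable_one_add_of_summable (summable_halfProd_term hτ _)

lemma halfProd_add_one (τ z : ℂ) : halfProd τ (z + 1) = halfProd τ z := by
  refine tprod_congr fun n => ?_
  rw [show 2 * Real.pi * I * (z + 1 + n * τ) =
    2 * Real.pi * I * (z + n * τ) + 2 * Real.pi * I by ring, Complex.exp_periodic]

lemma exists_of_halfProd_eq_zero {τ : ℂ} (hτ : 0 < τ.im) {z : ℂ} (h : halfProd τ z = 0) :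
    ∃ (n : ℕ) (m : ℤ), z + n * τ = m := by
  by_contra! hne
  refine tprod_one_add_ne_zero_of_summable (fun n h0 => ?_) (summable_halfProd_term hτ z) h
  rw [← sub_eq_add_neg, sub_eq_zero, eq_comm, Complex.exp_eq_one_iff] at h0
  obtain ⟨m, hm⟩ := h0
  refine hne n m (mul_left_cancel₀ Complex.two_pi_I_ne_zero ?_)
  rw [hm]
  ring

/-- The theta product `∏_{n ≥ 0} (1 - exp (2πi (z + nτ))) (1 - exp (2πi ((n + 1)τ - z)))`. -/
def thetaProd (τ z : ℂ) : ℂ := halfProd τ z * halfProd τ (τ - z)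

lemma differentiable_thetaProd {τ : ℂ} (hτ : 0 < τ.im) : Differentiable ℂ (thetaProd τ) := by
  have := differentiable_halfProd hτ
  unfold thetaProd
  fun_prop

lemma thetaProd_add_one (τ z : ℂ) : thetaProd τ (z + 1) = thetaProd τ z := by
  rw [thetaProd, thetaProd, halfProd_add_one, ← halfProd_add_one τ (τ - (z + 1))]
  ring_nf

lemma thetaProd_add_tau {τ : ℂ} (hτ : 0 < τ.im) (z : ℂ) :
    thetaProd τ (z + τ) = -Complex.exp (-(2 * Real.pi * I * z)) * thetaProd τ z := by
  rw [thetaProd, thetaProd, halfProd_eq_mul hτ z, show τ - (z + τ) = -z by ring,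
    halfProd_eq_mul hτ (-z), show -z + τ = τ - z by ring, mul_neg, Complex.exp_neg]
  have := Complex.exp_ne_zero (2 * Real.pi * I * z)
  field_simp
  ring

lemma exists_of_thetaProd_eq_zero {τ : ℂ} (hτ : 0 < τ.im) {z : ℂ} (h : thetaProd τ z = 0) :
    ∃ m n : ℤ, z = m + n * τ := by
  rcases mul_eq_zero.mp h with h | h
  · obtain ⟨n, m, hn⟩ := exists_of_halfProd_eq_zero hτ h
    exact ⟨m, -n, by push_cast; linear_combination hn⟩
  · obtain ⟨n, m, hn⟩ := exists_of_halfProd_eq_zero hτ h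
    exact ⟨-m, n + 1, by push_cast; linear_combination -hn⟩

lemma halfProd_tau_ne_zero {τ : ℂ} (hτ : 0 < τ.im) : halfProd τ τ ≠ 0 := by
  intro h
  obtain ⟨n, m, hn⟩ := exists_of_halfProd_eq_zero hτ h
  have him := congrArg Complex.im hn
  simp only [add_im, mul_im, natCast_re, natCast_im, zero_mul, add_zero, intCast_im] at him
  have : 0 ≤ (n : ℝ) * τ.im := by positivity
  linarith

lemma hasDerivAt_thetaProd_zero {τ : ℂ} (hτ : 0 < τ.im) :
    HasDerivAt (thetaProd τ) (-(2 * Real.pi * I) * (halfProd τ τ * halfProd τ τ)) 0 := by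
  have hfun : thetaProd τ = fun z => (1 - Complex.exp (2 * Real.pi * I * z)) *
      (halfProd τ (z + τ) * halfProd τ (τ - z)) := by
    ext z
    rw [thetaProd, halfProd_eq_mul hτ z, mul_assoc]
  rw [hfun]
  have hd := differentiable_halfProd hτ
  have h1 : HasDerivAt (fun z : ℂ => 1 - Complex.exp (2 * Real.pi * I * z))
      (-(2 * Real.pi * I)) 0 := by
    have := (((hasDerivAt_id (0 : ℂ)).const_mul (2 * Real.pi * I)).cexp).const_sub 1
    simpa using this
  have h2 : DifferentiableAt ℂ (fun z => halfProd τ (z + τ) * halfProd τ (τ - z)) 0 := by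
    fun_prop
  simpa using h1.fun_mul h2.hasDerivAt

lemma deriv_ne_zero_of_thetaProd_eq_zero {τ : ℂ} (hτ : 0 < τ.im) {z : ℂ}
    (h : thetaProd τ z = 0) : deriv (thetaProd τ) z ≠ 0 := by
  obtain ⟨m, n, rfl⟩ := exists_of_thetaProd_eq_zero hτ h
  have hd := differentiable_thetaProd hτ
  have hinv := iff_add_lattice (τ := τ)
    (P := fun z => thetaProd τ z = 0 ∧ deriv (thetaProd τ) z ≠ 0) ?_ ?_ m n 0
  · simp only [zero_add] at hinv
    refine (hinv.mpr ⟨?_, ?_⟩).2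
    · simp [thetaProd, halfProd_eq_mul hτ 0]
    · rw [(hasDerivAt_thetaProd_zero hτ).deriv]
      simp [Real.pi_ne_zero, halfProd_tau_ne_zero hτ]
  · intro z
    rw [← deriv_comp_add_const]
    simp only [thetaProd_add_one]
  · intro z
    rw [← deriv_comp_add_const]
    simp only [thetaProd_add_tau hτ, mul_eq_zero, neg_eq_zero, Complex.exp_ne_zero, false_or]
    refine and_congr_right fun h0 => not_congr ?_
    have he : DifferentiableAt ℂ (fun z => -Complex.exp (-(2 * Real.pi * I * z))) z := by fun_prop
    rw [deriv_fun_mul he (hd z), h0]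
    simp

end EulerProduct

section Theta

lemma θ_eq_jacobiTheta₂ (τ z : ℂ) : θ τ z =
    I * Complex.exp (Real.pi * I * τ / 4 - Real.pi * I * z) *
      jacobiTheta₂ (z + 1 / 2 - τ / 2) τ := by
  rw [θ, jacobiTheta₂, ← tsum_mul_left, ← tsum_mul_left]
  refine tsum_congr fun n => ?_
  rw [mul_assoc I (Complex.exp _)]
  refine congrArg (I * ·) ?_
  rw [jacobiTheta₂_term, ← Complex.exp_pi_mul_I, ← Complex.exp_int_mul, ← Complex.exp_add,
    ← Complex.exp_add, ← Complex.exp_add]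
  congr 1
  ring

lemma θ_add_one (τ z : ℂ) : θ τ (z + 1) = -θ τ z := by
  rw [θ_eq_jacobiTheta₂, θ_eq_jacobiTheta₂,
    show z + 1 + 1 / 2 - τ / 2 = z + 1 / 2 - τ / 2 + 1 by ring, jacobiTheta₂_add_left,
    show Real.pi * I * τ / 4 - Real.pi * I * (z + 1) =
      Real.pi * I * τ / 4 - Real.pi * I * z - Real.pi * I by ring,
    Complex.exp_sub_pi_mul_I]
  ring

lemma θ_add_tau (τ z : ℂ) : θ τ (z + τ) =
    -Complex.exp (-(Real.pi * I * τ)) * Complex.exp (-(2 * Real.pi * I * z)) * θ τ z := by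
  rw [θ_eq_jacobiTheta₂, θ_eq_jacobiTheta₂,
    show z + τ + 1 / 2 - τ / 2 = z + 1 / 2 - τ / 2 + τ by ring, jacobiTheta₂_add_left',
    show -Real.pi * I * (τ + 2 * (z + 1 / 2 - τ / 2)) = -(2 * Real.pi * I * z) - Real.pi * I by
      ring, Complex.exp_sub_pi_mul_I,
    show Real.pi * I * τ / 4 - Real.pi * I * (z + τ) =
      Real.pi * I * τ / 4 - Real.pi * I * z + -(Real.pi * I * τ) by ring, Complex.exp_add]
  ring

lemma differentiable_θ {τ : ℂ} (hτ : 0 < τ.im) : Differentiable ℂ (θ τ) := by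
  have hJ : Differentiable ℂ (jacobiTheta₂ · τ) := fun z => differentiableAt_jacobiTheta₂_fst z hτ
  rw [show θ τ = fun z => _ from funext (θ_eq_jacobiTheta₂ τ)]
  fun_prop

lemma θ_zero (τ : ℂ) : θ τ 0 = 0 := by
  have h := jacobiTheta₂_neg_left (1 / 2 - τ / 2) τ
  have h1 := jacobiTheta₂_add_left (1 / 2 - τ / 2 - 1) τ
  rw [show -(1 / 2 - τ / 2) = 1 / 2 - τ / 2 - 1 + τ by ring, jacobiTheta₂_add_left',
    show -Real.pi * I * (τ + 2 * (1 / 2 - τ / 2 - 1)) = Real.pi * I by ring,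
    Complex.exp_pi_mul_I] at h
  rw [sub_add_cancel] at h1
  rw [θ_eq_jacobiTheta₂, zero_add]
  refine mul_eq_zero_of_right _ ?_
  linear_combination (-(1 / 2 : ℂ)) * h + (1 / 2 : ℂ) * h1

lemma exists_jacobiTheta₂_ne_zero {τ : ℂ} (hτ : 0 < τ.im) : ∃ z, jacobiTheta₂ z τ ≠ 0 := by
  by_contra! h
  let f : ℤ → C(ℝ, ℂ) := fun n =>
    ⟨fun x => jacobiTheta₂_term n x τ, by unfold jacobiTheta₂_term; fun_prop⟩
  have hnorm : ∀ (n : ℤ) (x : ℝ), ‖f n x‖ = ‖jacobiTheta₂_term n 0 τ‖ := fun n x => by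
    simp [f, norm_jacobiTheta₂_term]
  have hsum := intervalIntegral.hasSum_intervalIntegral_of_summable_norm (a := 0) (b := 1)
    (f := f) (Summable.of_nonneg_of_le (fun _ => norm_nonneg _)
      (fun n => (ContinuousMap.norm_le _ (norm_nonneg _)).mpr fun x => (hnorm n x).le)
      ((summable_jacobiTheta₂_term_iff 0 τ).mpr hτ).norm)
  have h0 : ∀ x : ℝ, ∑' n, f n x = 0 := fun x => h x
  have hint : ∀ n : ℤ, ∫ x in (0 : ℝ)..1, f n x = if n = 0 then 1 else 0 := by
    intro n
    have hf : ∀ x : ℝ, f n x =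
        Complex.exp (Real.pi * I * n ^ 2 * τ) * Complex.exp (2 * Real.pi * I * n * x) := fun x => by
      simp only [f, ContinuousMap.coe_mk, jacobiTheta₂_term]
      rw [Complex.exp_add, mul_comm]
    simp only [hf]
    rcases eq_or_ne n 0 with rfl | hn
    · simp
    · rw [intervalIntegral.integral_const_mul, integral_exp_mul_complex (by simp [hn])]
      have : Complex.exp (2 * Real.pi * I * n) = 1 := by
        rw [mul_comm]; exact Complex.exp_int_mul_two_pi_mul_I n
      simp [hn, this]
  simp only [h0, hint, intervalIntegral.integral_zero] at hsum
  exact one_ne_zero ((hasSum_ite_eq (0 : ℤ) (1 : ℂ)).unique hsum)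

lemma countable_of_subset_lattice {τ : ℂ} {s : Set ℂ} (h : ∀ z ∈ s, ∃ m n : ℤ, z = m + n * τ) :
    s.Countable :=
  (Set.countable_range fun p : ℤ × ℤ => (p.1 + p.2 * τ : ℂ)).mono fun z hz => by
    obtain ⟨m, n, rfl⟩ := h z hz
    exact ⟨(m, n), rfl⟩

lemma θ_add_lattice_eq_zero_iff (τ z : ℂ) (m n : ℤ) : θ τ (z + m + n * τ) = 0 ↔ θ τ z = 0 :=
  iff_add_lattice (P := fun z => θ τ z = 0) (fun z => by rw [θ_add_one, neg_eq_zero])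
    (fun z => by simp [θ_add_tau, Complex.exp_ne_zero]) m n z

lemma θ_lattice (τ : ℂ) (m n : ℤ) : θ τ (m + n * τ) = 0 := by
  simpa using (θ_add_lattice_eq_zero_iff τ 0 m n).mpr (θ_zero τ)

/-- The Jacobi triple product, up to the value of the constant. -/
lemma exists_θ_eq_thetaProd {τ : ℂ} (hτ : 0 < τ.im) :
    ∃ K : ℂ, K ≠ 0 ∧ ∀ z, θ τ z = K * (Complex.exp (-(Real.pi * I * z)) * thetaProd τ z) := by
  have hd := differentiable_θ hτ
  have hdP := differentiable_thetaProd hτ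
  obtain ⟨g, hg, hfg⟩ := exists_entire_quotient
    (f := fun z => θ τ z * Complex.exp (Real.pi * I * z))
    (p := thetaProd τ) (by fun_prop) hdP
    (fun z => deriv_ne_zero_of_thetaProd_eq_zero hτ) (fun z hz => by
      obtain ⟨m, n, rfl⟩ := exists_of_thetaProd_eq_zero hτ hz
      simp [θ_lattice])
  have hc : {z | thetaProd τ z = 0}.Countable :=
    countable_of_subset_lattice fun z hz => exists_of_thetaProd_eq_zero hτ hz
  have hcont := hg.continuous
  have h1 : ∀ z, g (z + 1) = g z := eq_of_eq_off_countable hc (by fun_prop) hcont fun z hz => by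
    have h := hfg (z + 1)
    rw [θ_add_one, thetaProd_add_one, mul_add, mul_one, Complex.exp_add, Complex.exp_pi_mul_I] at h
    exact mul_left_cancel₀ hz (by linear_combination hfg z - h)
  have h2 : ∀ z, g (z + τ) = g z := eq_of_eq_off_countable hc (by fun_prop) hcont fun z hz => by
    have h := hfg (z + τ)
    rw [θ_add_tau, thetaProd_add_tau hτ, mul_add, Complex.exp_add, Complex.exp_neg (_ * τ)] at h
    have hτ0 := Complex.exp_ne_zero (Real.pi * I * τ)
    have he := Complex.exp_ne_zero (-(2 * Real.pi * I * z))
    field_simp at h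
    exact mul_left_cancel₀ hz (by linear_combination hfg z + h)
  obtain ⟨K, hK⟩ := eq_const_of_norm_periodic hτ hg (fun z => by rw [h1]) (fun z => by rw [h2])
  have hθ : ∀ z, θ τ z = K * (Complex.exp (-(Real.pi * I * z)) * thetaProd τ z) := fun z => by
    have h := hfg z
    rw [hK] at h
    rw [Complex.exp_neg]
    have he := Complex.exp_ne_zero (Real.pi * I * z)
    field_simp
    linear_combination h
  refine ⟨K, ?_, hθ⟩
  rintro rfl
  obtain ⟨z, hz⟩ := exists_jacobiTheta₂_ne_zero hτ
  have h := hθ (z - 1 / 2 + τ / 2)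
  rw [θ_eq_jacobiTheta₂, show z - 1 / 2 + τ / 2 + 1 / 2 - τ / 2 = z by ring] at h
  simp [Complex.exp_ne_zero, hz] at h

lemma θ_eq_zero_iff {τ : ℂ} (hτ : 0 < τ.im) {z : ℂ} :
    θ τ z = 0 ↔ ∃ m n : ℤ, z = m + n * τ := by
  refine ⟨fun h => ?_, ?_⟩
  · obtain ⟨K, hK, hθ⟩ := exists_θ_eq_thetaProd hτ
    simp only [hθ, mul_eq_zero, hK, Complex.exp_ne_zero, false_or] at h
    exact exists_of_thetaProd_eq_zero hτ h
  · rintro ⟨m, n, rfl⟩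
    exact θ_lattice τ m n

lemma deriv_θ_ne_zero {τ : ℂ} (hτ : 0 < τ.im) {z : ℂ} (h : θ τ z = 0) : deriv (θ τ) z ≠ 0 := by
  obtain ⟨K, hK, hθ⟩ := exists_θ_eq_thetaProd hτ
  have hdP := differentiable_thetaProd hτ
  have h0 : thetaProd τ z = 0 := by
    simpa only [hθ, mul_eq_zero, hK, Complex.exp_ne_zero, false_or] using h
  rw [show θ τ = fun z => _ from funext hθ, deriv_const_mul _ (by fun_prop),
    deriv_fun_mul (by fun_prop) (hdP z), h0, mul_zero, zero_add]
  exact mul_ne_zero hK (mul_ne_zero (Complex.exp_ne_zero _)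
    (deriv_ne_zero_of_thetaProd_eq_zero hτ h0))

lemma countable_θ_comp_eq_zero {τ : ℂ} (hτ : 0 < τ.im) {φ : ℂ → ℂ} (hφ : φ.Injective) :
    {z | θ τ (φ z) = 0}.Countable := by
  have hc : {z | θ τ z = 0}.Countable :=
    countable_of_subset_lattice fun z hz => (θ_eq_zero_iff hτ).mp hz
  exact hc.preimage hφ

lemma countable_θ_add_eq_zero {τ : ℂ} (hτ : 0 < τ.im) (a : ℂ) :
    {z | θ τ (z + a) = 0}.Countable :=
  countable_θ_comp_eq_zero hτ (add_left_injective a)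

end Theta

section ThetaFunctions

/-- Entire functions of degree `N` and characteristic `s`: those with the quasi-periodicity of
`∏ θ (z + aᵢ)` for `N` numbers `aᵢ` of sum `s`. -/
structure IsThetaFunction (τ : ℂ) (N : ℕ) (s : ℂ) (h : ℂ → ℂ) : Prop where
  diff : Differentiable ℂ h
  add_one : ∀ z, h (z + 1) = (-1) ^ N * h z
  add_tau : ∀ z, h (z + τ) = (-Complex.exp (-(Real.pi * I * τ))) ^ N *
    Complex.exp (-(2 * Real.pi * I * (N * z + s))) * h z

namespace IsThetaFunction

variable {τ s t : ℂ} {N M : ℕ} {f h : ℂ → ℂ}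

lemma theta (hτ : 0 < τ.im) (a : ℂ) : IsThetaFunction τ 1 a fun z => θ τ (z + a) where
  diff := by have := differentiable_θ hτ; fun_prop
  add_one z := by rw [add_right_comm, θ_add_one]; ring
  add_tau z := by
    rw [add_right_comm, θ_add_tau]
    simp

lemma mul (hf : IsThetaFunction τ N s f) (hh : IsThetaFunction τ M t h) :
    IsThetaFunction τ (N + M) (s + t) fun z => f z * h z where
  diff := hf.diff.mul hh.diff
  add_one z := by rw [hf.add_one, hh.add_one]; ring
  add_tau z := by
    rw [hf.add_tau, hh.add_tau, show -(2 * Real.pi * I * ((N + M : ℕ) * z + (s + t))) =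
      -(2 * Real.pi * I * (N * z + s)) + -(2 * Real.pi * I * (M * z + t)) by push_cast; ring,
      Complex.exp_add]
    ring

lemma const_mul (hh : IsThetaFunction τ N s h) (c : ℂ) :
    IsThetaFunction τ N s fun z => c * h z where
  diff := hh.diff.const_mul c
  add_one z := by rw [hh.add_one]; ring
  add_tau z := by rw [hh.add_tau]; ring

lemma sub (hf : IsThetaFunction τ N s f) (hh : IsThetaFunction τ N s h) :
    IsThetaFunction τ N s fun z => f z - h z where
  diff := hf.diff.sub hh.diff
  add_one z := by rw [hf.add_one, hh.add_one]; ring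
  add_tau z := by rw [hf.add_tau, hh.add_tau]; ring

lemma one (τ : ℂ) : IsThetaFunction τ 0 0 fun _ => 1 where
  diff := by fun_prop
  add_one z := by simp
  add_tau z := by simp

lemma theta_zero_pow (hτ : 0 < τ.im) (N : ℕ) : IsThetaFunction τ N 0 fun z => θ τ z ^ N := by
  induction N with
  | zero => simpa using one τ
  | succ N ih => simpa [pow_succ] using ih.mul (theta hτ 0)

lemma theta_mul_pow (hτ : 0 < τ.im) (N : ℕ) (s : ℂ) :
    IsThetaFunction τ (N + 1) s fun z => θ τ z ^ N * θ τ (z + s) := by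
  simpa using (theta_zero_pow hτ N).mul (theta hτ s)

lemma add_lattice_eq_zero_iff (hh : IsThetaFunction τ N s h) (m n : ℤ) (z : ℂ) :
    h (z + m + n * τ) = 0 ↔ h z = 0 :=
  iff_add_lattice (P := fun z => h z = 0) (fun z => by simp [hh.add_one])
    (fun z => by simp [hh.add_tau, Complex.exp_ne_zero]) m n z

/-- The characteristic of a nonzero theta function of degree `0` lies in `ℤ + τℤ`. -/
lemma degree_zero (hτ : 0 < τ.im) (hh : IsThetaFunction τ 0 s h) {z₀ : ℂ} (h0 : h z₀ ≠ 0) :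
    ∃ m n : ℤ, s = m + n * τ := by
  have h1 := hh.add_one
  have h2 := hh.add_tau
  simp only [pow_zero, one_mul, CharP.cast_eq_zero, zero_mul, zero_add] at h1 h2
  set b : ℝ := 2 * Real.pi * s.im / τ.im with hb
  obtain ⟨c, hc⟩ := eq_const_of_norm_periodic hτ (f := fun z => h z * Complex.exp (b * I * z))
    (by have := hh.diff; fun_prop)
    (fun z => by
      simp [h1, Complex.norm_exp])
    (fun z => by
      rw [h2, mul_comm (Complex.exp _), mul_assoc, ← Complex.exp_add, norm_mul, norm_mul,
        Complex.norm_exp, Complex.norm_exp]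
      congr 2
      simp [hb]
      field_simp
      ring)
  have hne : ∀ z, h z ≠ 0 := fun z hz => by
    have e1 := hc z
    rw [hz, zero_mul] at e1
    have e2 := hc z₀
    rw [← e1] at e2
    exact mul_ne_zero h0 (Complex.exp_ne_zero _) e2
  have e1 : Complex.exp (b * I) = 1 := by
    have := (hc (0 + 1)).trans (hc 0).symm
    rw [h1] at this
    simpa using mul_left_cancel₀ (hne 0) this
  have e2 : Complex.exp (-(2 * Real.pi * I * s) + b * I * τ) = 1 := by
    have := (hc (0 + τ)).trans (hc 0).symm
    rw [h2, mul_comm (Complex.exp _), mul_assoc, ← Complex.exp_add] at this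
    simpa using mul_left_cancel₀ (hne 0) this
  obtain ⟨n, hn⟩ := Complex.exp_eq_one_iff.mp e1
  obtain ⟨m, hm⟩ := Complex.exp_eq_one_iff.mp e2
  refine ⟨-m, n, mul_left_cancel₀ Complex.two_pi_I_ne_zero ?_⟩
  push_cast
  linear_combination -hm + τ * hn

/-- Theta functions with the same degree and characteristic are proportional as soon as their
quotient is entire. -/
lemma const_of_mul (hτ : 0 < τ.im) (hf : IsThetaFunction τ N s f) (hh : IsThetaFunction τ N s h)
    (hc : {z | h z = 0}.Countable) {g : ℂ → ℂ} (hg : Differentiable ℂ g)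
    (hfg : ∀ z, f z = h z * g z) : ∃ c, ∀ z, f z = c * h z := by
  have hcont := hg.continuous
  have h1 : ∀ z, g (z + 1) = g z := eq_of_eq_off_countable hc (by fun_prop) hcont fun z hz => by
    have e := hfg (z + 1)
    rw [hf.add_one, hh.add_one, hfg z] at e
    have : ((-1 : ℂ)) ^ N ≠ 0 := by simp
    exact (mul_left_cancel₀ (mul_ne_zero this hz) (by linear_combination e)).symm
  have h2 : ∀ z, g (z + τ) = g z := eq_of_eq_off_countable hc (by fun_prop) hcont fun z hz => by
    have e := hfg (z + τ)
    simp only [hf.add_tau, hh.add_tau, hfg z, mul_assoc] at e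
    have e' := mul_left_cancel₀ (pow_ne_zero _ (neg_ne_zero.mpr (Complex.exp_ne_zero _))) e
    exact (mul_left_cancel₀ hz (mul_left_cancel₀ (Complex.exp_ne_zero _) e')).symm
  obtain ⟨c, hcc⟩ := eq_const_of_norm_periodic hτ hg (fun z => by rw [h1]) (fun z => by rw [h2])
  exact ⟨c, fun z => by rw [hfg, hcc, mul_comm]⟩

lemma exists_eq_zero (hτ : 0 < τ.im) (hh : IsThetaFunction τ (N + 1) s h) : ∃ a, h (-a) = 0 := by
  by_contra! hne
  have hne' : ∀ z, h z ≠ 0 := fun z => by simpa using hne (-z)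
  have hf := theta_mul_pow hτ N s
  have hd := hf.diff
  have hdh := hh.diff
  obtain ⟨c, hc⟩ := hf.const_of_mul hτ hh (by simp [hne'])
    (g := fun z => (θ τ z ^ N * θ τ (z + s)) / h z) (fun z => (hd z).fun_div (hdh z) (hne' z))
    (fun z => by rw [mul_div_cancel₀ _ (hne' z)])
  have hc0 : c = 0 := by
    have := hc (-s)
    simpa [θ_zero, hne'] using this
  have hcount : ({z | θ τ (z + 0) = 0} ∪ {z | θ τ (z + s) = 0}).Countable :=
    (countable_θ_add_eq_zero hτ 0).union (countable_θ_add_eq_zero hτ s)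
  obtain ⟨z, hz⟩ := (hcount.dense_compl ℂ).nonempty
  have := hc z
  simp_all

lemma exists_div (hτ : 0 < τ.im) (hh : IsThetaFunction τ (N + 1) s h) {a : ℂ} (ha : h (-a) = 0) :
    ∃ g, IsThetaFunction τ N (s - a) g ∧ ∀ z, h z = θ τ (z + a) * g z := by
  have hθ := theta hτ a
  obtain ⟨g, hg, hhg⟩ := exists_entire_quotient (p := fun z => θ τ (z + a)) hh.diff hθ.diff
    (fun z hz => by
      rw [deriv_comp_add_const]
      exact deriv_θ_ne_zero hτ hz)
    (fun z hz => by
      obtain ⟨m, n, hmn⟩ := (θ_eq_zero_iff hτ).mp hz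
      rw [show z = -a + m + n * τ by linear_combination hmn]
      exact (hh.add_lattice_eq_zero_iff m n _).mpr ha)
  have hcont := hg.continuous
  have hc := countable_θ_add_eq_zero hτ a
  refine ⟨g, ⟨hg, ?_, ?_⟩, hhg⟩
  · refine eq_of_eq_off_countable hc (by fun_prop) (by fun_prop) fun z hz => ?_
    have e := hhg (z + 1)
    rw [hh.add_one, hθ.add_one, hhg z] at e
    exact mul_left_cancel₀ hz (by linear_combination e)
  · refine eq_of_eq_off_countable hc (by fun_prop) (by fun_prop) fun z hz => ?_
    have e := hhg (z + τ)
    rw [hh.add_tau, hθ.add_tau, hhg z, show -(2 * Real.pi * I * ((N + 1 : ℕ) * z + s)) =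
      -(2 * Real.pi * I * ((1 : ℕ) * z + a)) + -(2 * Real.pi * I * (N * z + (s - a))) by
        push_cast; ring, Complex.exp_add] at e
    have hκ := neg_ne_zero.mpr (Complex.exp_ne_zero (-(Real.pi * I * τ)))
    have he := Complex.exp_ne_zero (-(2 * Real.pi * I * ((1 : ℕ) * z + a)))
    exact mul_left_cancel₀ (mul_ne_zero hz (mul_ne_zero hκ he)) (by linear_combination -e)

lemma degree_one (hτ : 0 < τ.im) (hh : IsThetaFunction τ 1 s h) :
    ∃ c, ∀ z, h z = c * θ τ (z + s) := by
  by_cases hne : ∃ z₀, h z₀ ≠ 0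
  swap
  · push Not at hne
    exact ⟨0, by simpa using hne⟩
  obtain ⟨z₀, hz₀⟩ := hne
  obtain ⟨a, ha⟩ := exists_eq_zero hτ hh
  obtain ⟨g, hg, hhg⟩ := exists_div hτ hh ha
  obtain ⟨m, n, hmn⟩ := hg.degree_zero hτ (z₀ := z₀) fun h0 => hz₀ (by simp [hhg, h0])
  have hs : h (-s) = 0 := by
    rw [← hh.add_lattice_eq_zero_iff m n, ← ha]
    congr 1
    linear_combination -hmn
  obtain ⟨g', hg', hhg'⟩ := exists_div hτ hh hs
  exact hh.const_of_mul hτ (theta hτ s) (countable_θ_add_eq_zero hτ s) hg'.diff hhg'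

/-- Every theta function of positive degree is a product of translates of `θ`. -/
lemma exists_eq_prod (hτ : 0 < τ.im) : ∀ {N : ℕ} {s : ℂ} {h : ℂ → ℂ},
    IsThetaFunction τ (N + 1) s h →
    ∃ (c : ℂ) (a : Fin (N + 1) → ℂ), ∑ i, a i = s ∧ ∀ z, h z = c * ∏ i, θ τ (z + a i) := by
  intro N
  induction N with
  | zero =>
    intro s h hh
    obtain ⟨c, hc⟩ := degree_one hτ hh
    exact ⟨c, fun _ => s, by simp, by simpa using hc⟩
  | succ N ih =>
    intro s h hh
    obtain ⟨a, ha⟩ := exists_eq_zero hτ hh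
    obtain ⟨g, hg, hhg⟩ := exists_div hτ hh ha
    obtain ⟨c, b, hb, hgb⟩ := ih hg
    refine ⟨c, Fin.cons a b, ?_, fun z => ?_⟩
    · rw [Fin.sum_univ_succ]
      simp [hb]
    · rw [Fin.prod_univ_succ, hhg, hgb]
      simp only [Fin.cons_zero, Fin.cons_succ]
      ring

/-- Theta functions of degree `N + 1` and given characteristic form a space of
dimension `N + 1`. -/
lemma exists_basis (hτ : 0 < τ.im) : ∀ (N : ℕ) (s : ℂ), ∃ B : Fin (N + 1) → ℂ → ℂ,
    (∀ i, IsThetaFunction τ (N + 1) s (B i)) ∧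
    (∀ c : Fin (N + 1) → ℂ, (∀ z, ∑ i, c i * B i z = 0) → ∀ i, c i = 0) ∧
    ∀ h, IsThetaFunction τ (N + 1) s h → ∃ c : Fin (N + 1) → ℂ, ∀ z, h z = ∑ i, c i * B i z := by
  intro N
  induction N with
  | zero =>
    intro s
    refine ⟨fun _ z => θ τ (z + s), fun _ => theta hτ s, fun c hc i => ?_, fun h hh => ?_⟩
    · obtain ⟨z, hz⟩ := ((countable_θ_add_eq_zero hτ s).dense_compl ℂ).nonempty
      have := hc z
      have hi : i = 0 := Fin.fin_one_eq_zero i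
      rw [hi]
      simp_all
    · obtain ⟨c, hc⟩ := degree_one hτ hh
      exact ⟨fun _ => c, by simpa using hc⟩
  | succ N ih =>
    intro s
    have hf := theta_mul_pow hτ (N + 1) s
    set f : ℂ → ℂ := fun z => θ τ z ^ (N + 1) * θ τ (z + s) with hfdef
    have hcount : ({z | θ τ (z + 0) = 0} ∪ {z | θ τ (z + s) = 0}).Countable :=
      (countable_θ_add_eq_zero hτ 0).union (countable_θ_add_eq_zero hτ s)
    obtain ⟨z₀, hz₀⟩ := (hcount.dense_compl ℂ).nonempty
    have hfz₀ : f z₀ ≠ 0 := by simp_all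
    obtain ⟨B, hB, hlin, hspan⟩ := ih (s - -z₀)
    have hB0 : ∀ c : Fin (N + 1) → ℂ, ∑ i, c i * (θ τ (z₀ + -z₀) * B i z₀) = 0 := fun c => by
      simp [θ_zero]
    refine ⟨Fin.cons f fun i z => θ τ (z + -z₀) * B i z, ?_, fun c hc => ?_, fun h hh => ?_⟩
    · refine Fin.cases hf fun i => ?_
      simpa [mul_comm] using (hB i).mul (theta hτ (-z₀))
    · simp only [Fin.sum_univ_succ (n := N + 1), Fin.cons_zero, Fin.cons_succ] at hc
      have hc0 : c 0 = 0 := by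
        have := hc z₀
        rw [hB0 fun i => c i.succ, add_zero] at this
        exact (mul_eq_zero.mp this).resolve_right hfz₀
      have hcont : ∀ i, Continuous (B i) := fun i => (hB i).diff.continuous
      refine Fin.cases hc0 (hlin (fun i => c i.succ) ?_)
      refine eq_of_eq_off_countable (countable_θ_add_eq_zero hτ (-z₀)) (by fun_prop)
        continuous_const fun z hz => mul_left_cancel₀ hz ?_
      rw [mul_zero, ← hc z, hc0, zero_mul, zero_add, Finset.mul_sum]
      exact Finset.sum_congr rfl fun i _ => by ring
    · obtain ⟨g, hg, hhg⟩ := exists_div hτ (hh.sub (hf.const_mul (h z₀ / f z₀))) (a := -z₀)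
        (by simp [div_mul_cancel₀ _ hfz₀])
      obtain ⟨c, hc⟩ := hspan g hg
      refine ⟨Fin.cons (h z₀ / f z₀) c, fun z => ?_⟩
      simp only [Fin.sum_univ_succ (n := N + 1), Fin.cons_zero, Fin.cons_succ]
      have e := hhg z
      rw [hc, Finset.mul_sum] at e
      rw [← sub_eq_iff_eq_add', e]
      exact Finset.sum_congr rfl fun i _ => by ring

end IsThetaFunction

end ThetaFunctions

section Pk

variable {τ : ℂ}

lemma isThetaFunction_θ_two_mul (hτ : 0 < τ.im) (w : ℂ) :
    IsThetaFunction τ 4 (2 * w) fun z => θ τ (2 * z + w) where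
  diff := by have := differentiable_θ hτ; fun_prop
  add_one z := by
    rw [show 2 * (z + 1) + w = 2 * z + w + 1 + 1 by ring, θ_add_one, θ_add_one]
    ring
  add_tau z := by
    rw [show 2 * (z + τ) + w = 2 * z + w + τ + τ by ring, θ_add_tau, θ_add_tau,
      show -(2 * Real.pi * I * (2 * z + w + τ)) = -(2 * Real.pi * I * (2 * z + w)) +
        (-(Real.pi * I * τ) + -(Real.pi * I * τ)) by ring,
      show -(2 * Real.pi * I * ((4 : ℕ) * z + 2 * w)) = -(2 * Real.pi * I * (2 * z + w)) +
        -(2 * Real.pi * I * (2 * z + w)) by push_cast; ring]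
    simp only [Complex.exp_add]
    ring

lemma isThetaFunction_Pk (hτ : 0 < τ.im) (η : ℂ) (k : ℕ) :
    IsThetaFunction τ (4 * k) (2 * k * (k - 1) * η) (Pk τ η k) := by
  induction k with
  | zero =>
    rw [show Pk τ η 0 = fun _ => 1 from funext fun z => Finset.prod_range_zero _]
    simpa using IsThetaFunction.one τ
  | succ k ih =>
    have h := ih.mul (isThetaFunction_θ_two_mul hτ (2 * k * η))
    rw [show 2 * k * (k - 1) * η + 2 * (2 * k * η) =
      2 * (k + 1 : ℕ) * ((k + 1 : ℕ) - 1) * η by push_cast; ring] at h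
    rw [show Pk τ η (k + 1) = _ from funext fun z => Finset.prod_range_succ _ k]
    exact h

lemma countable_Pk_eq_zero (hτ : 0 < τ.im) (η : ℂ) (k : ℕ) : {z | Pk τ η k z = 0}.Countable := by
  have h : {z | Pk τ η k z = 0} ⊆ ⋃ ℓ : ℕ, {z | θ τ (2 * z + 2 * (ℓ : ℂ) * η) = 0} :=
    fun z hz => by
      obtain ⟨ℓ, -, hℓ⟩ := Finset.prod_eq_zero_iff.mp hz
      exact Set.mem_iUnion.mpr ⟨ℓ, hℓ⟩
  refine (Set.countable_iUnion fun ℓ => countable_θ_comp_eq_zero hτ ?_).mono h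
  exact (add_left_injective _).comp (mul_right_injective₀ two_ne_zero)

lemma memVk.exists_isThetaFunction (hτ : 0 < τ.im) {μ η ν : ℂ} {k : ℕ} {g : ℂ → ℂ}
    (hg : memVk τ μ η k g) (hν : Complex.exp (8 * Real.pi * I * ν) = μ) :
    ∃ h, IsThetaFunction τ (4 * k) (2 * k * (k - 1) * η - 4 * k * ν) h ∧
      ∀ z, Pk τ η k z ≠ 0 → g z * Pk τ η k z = h z := by
  obtain ⟨-, hg1, hg2, h, hd, hgh⟩ := hg
  have hP := isThetaFunction_Pk hτ η k
  have hc := countable_Pk_eq_zero hτ η k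
  have hcont := hd.continuous
  refine ⟨h, ⟨hd, ?_, ?_⟩, hgh⟩
  · refine eq_of_eq_off_countable hc (by fun_prop) (by fun_prop) fun z hz => ?_
    rw [← hgh z hz, ← hgh (z + 1) (by simp [hP.add_one, hz]), hg1, hP.add_one]
    ring
  · refine eq_of_eq_off_countable hc (by fun_prop) (by fun_prop) fun z hz => ?_
    rw [← hgh z hz, ← hgh (z + τ) (by simp [hP.add_tau, hz, Complex.exp_ne_zero]), hg2, hP.add_tau,
      ← hν, ← Complex.exp_nat_mul, show -(2 * Real.pi * I * ((4 * k : ℕ) * z +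
        (2 * k * (k - 1) * η - 4 * k * ν))) = k * (8 * Real.pi * I * ν) +
        -(2 * Real.pi * I * ((4 * k : ℕ) * z + 2 * k * (k - 1) * η)) by ring, Complex.exp_add]
    ring

lemma IsThetaFunction.memVk_div (hτ : 0 < τ.im) {μ η ν : ℂ} {k : ℕ} {h : ℂ → ℂ}
    (hν : Complex.exp (8 * Real.pi * I * ν) = μ)
    (hh : IsThetaFunction τ (4 * k) (2 * k * (k - 1) * η - 4 * k * ν) h) :
    memVk τ μ η k fun z => h z / Pk τ η k z := by
  have hP := isThetaFunction_Pk hτ η k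
  refine ⟨fun z _ => ?_, fun z => ?_, fun z => ?_, h, hh.diff, fun z hz => div_mul_cancel₀ _ hz⟩
  · exact (hh.diff.analyticAt z).meromorphicAt.fun_div (hP.diff.analyticAt z).meromorphicAt
  · simp only [hh.add_one, hP.add_one]
    exact mul_div_mul_left _ _ (by simp)
  · beta_reduce
    rw [hh.add_tau, hP.add_tau, ← hν, ← Complex.exp_nat_mul,
      show -(2 * Real.pi * I * ((4 * k : ℕ) * z + (2 * k * (k - 1) * η - 4 * k * ν))) =
        -(2 * Real.pi * I * ((4 * k : ℕ) * z + 2 * k * (k - 1) * η)) + k * (8 * Real.pi * I * ν) by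
          ring, Complex.exp_add, ← mul_assoc, mul_assoc (_ * Complex.exp _),
      mul_div_mul_left _ _ (by simp [Complex.exp_ne_zero]), mul_div_assoc]

end Pk

/-- `V_k(μ)` is `4k`-dimensional, and every `g ∈ V_k(μ)` has the form
`g(z) = c·∏_{i=1}^{4k} θ(z+aᵢ−ν)/P_k(η,z)` with `∑ aᵢ = 2k(k−1)η`, where
`exp(8iπν) = μ` and `Re ν ∈ [0,1/4)`. -/
theorem statement0 (τ : ℂ) (hτ : 0 < τ.im) (μ : ℂ) (hμ : μ ≠ 0) (η : ℂ)
    (k : ℕ) (hk : 1 ≤ k) :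
    (∃ b : Fin (4 * k) → (ℂ → ℂ),
      (∀ i, memVk τ μ η k (b i)) ∧ LinearIndependent ℂ b ∧
      ∀ g, memVk τ μ η k g → ∃ c : Fin (4 * k) → ℂ,
        ∀ z, Pk τ η k z ≠ 0 → g z = ∑ i, c i * b i z) ∧
    (∀ g, memVk τ μ η k g → ∀ ν : ℂ,
      Complex.exp (8 * Real.pi * I * ν) = μ → ν.re ∈ Set.Ico (0 : ℝ) (1/4) →
      ∃ (c : ℂ) (a : Fin (4 * k) → ℂ), (∑ i, a i) = 2 * (k : ℂ) * ((k : ℂ) - 1) * η ∧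
        ∀ z, Pk τ η k z ≠ 0 → g z * Pk τ η k z = c * ∏ i, θ τ (z + a i - ν)) := by
  obtain ⟨N, hN⟩ : ∃ N, 4 * k = N + 1 := ⟨4 * k - 1, by omega⟩
  have hc := countable_Pk_eq_zero hτ η k
  constructor
  · set ν := Complex.log μ / (8 * Real.pi * I) with hνdef
    have hν : Complex.exp (8 * Real.pi * I * ν) = μ := by
      rw [hνdef, mul_div_cancel₀ _ (by simp [Real.pi_ne_zero]), Complex.exp_log hμ]
    have hbasis := IsThetaFunction.exists_basis hτ N (2 * k * (k - 1) * η - 4 * k * ν)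
    rw [← hN] at hbasis
    obtain ⟨B, hB, hlin, hspan⟩ := hbasis
    refine ⟨fun i z => B i z / Pk τ η k z, fun i => (hB i).memVk_div hτ hν,
      Fintype.linearIndependent_iff.mpr fun c hsum => hlin c ?_, fun g hg => ?_⟩
    · have hcont : ∀ i, Continuous (B i) := fun i => (hB i).diff.continuous
      refine eq_of_eq_off_countable hc (by fun_prop) continuous_const fun z hz => ?_
      have h := congrFun hsum z
      simp only [Finset.sum_apply, Pi.smul_apply, smul_eq_mul, Pi.zero_apply, ← mul_div_assoc,
        ← Finset.sum_div] at h
      exact (div_eq_zero_iff.mp h).resolve_right hz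
    · obtain ⟨h, hh, hgh⟩ := hg.exists_isThetaFunction hτ hν
      obtain ⟨c, hch⟩ := hspan h hh
      refine ⟨c, fun z hz => ?_⟩
      simp only [← mul_div_assoc, ← Finset.sum_div]
      rw [← hch, eq_div_iff hz, hgh z hz]
  · intro g hg ν hν _
    obtain ⟨h, hh, hgh⟩ := hg.exists_isThetaFunction hτ hν
    have hfactor := IsThetaFunction.exists_eq_prod hτ (hN ▸ hh)
    rw [← hN] at hfactor
    obtain ⟨c, a, ha, hprod⟩ := hfactor
    refine ⟨c, fun i => a i + ν, ?_, fun z hz => ?_⟩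
    · simp [Finset.sum_add_distrib, ha]
    · simp only [hgh z hz, hprod, ← add_assoc, add_sub_cancel_right]
end
end

section
/- Let η ∈ ℂ∖{0} satisfy nη ∉ Λ for every positive integer n, let ν ∈ ℂ, and set μ = exp(8iπν). Let k ≥ 1 and let c_{−k},…,c_k be meromorphic functions on ℂ, and let A act on meromorphic functions by (AF)(z) = ∑_{j=−k}^{k} c_j(z)F(z+jη). Then A maps ℳ_t into ℳ_t for every t ∈ {0,1,2,3} if and only if the family (c_j)_{|j|≤k} satisfies conditions (i)–(iii). -/
open Complex Filter

noncomputable section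

/-- The half-periods `ω₀ = 0, ω₁ = 1/2, ω₂ = (1+τ)/2, ω₃ = τ/2`. -/
def ωh (τ : ℂ) : Fin 4 → ℂ := ![0, 1/2, (1 + τ)/2, τ/2]

/-- `λ₀ = λ₁ = 0`, `λ₂ = λ₃ = 8iπν`. -/
def lamh (ν : ℂ) : Fin 4 → ℂ :=
  ![0, 0, 8 * Real.pi * I * ν, 8 * Real.pi * I * ν]

/-- `ε₀ = ε₁ = 1`, `ε₂ = ε₃ = μ`. -/
def εh (μ : ℂ) : Fin 4 → ℂ := ![1, 1, μ, μ]

/-- A meromorphic function is regular (analytic after removing a removable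
singularity) at a point. -/
def RegularAt (g : ℂ → ℂ) (p : ℂ) : Prop :=
  ∃ h : ℂ → ℂ, AnalyticAt ℂ h p ∧ ∀ᶠ z in nhdsWithin p {p}ᶜ, g z = h z

/-- `g` has at most a simple pole at `p`, with residue `r` (`r = 0` exactly when
`g` is regular at `p`). -/
def SimplePoleAt (g : ℂ → ℂ) (p r : ℂ) : Prop :=
  ∃ h : ℂ → ℂ, AnalyticAt ℂ h p ∧ ∀ᶠ z in nhdsWithin p {p}ᶜ, g z = r / (z - p) + h z

/-- Membership in the space `ℳ_t`. -/
def memM (τ η ν : ℂ) (t : Fin 4) (g : ℂ → ℂ) : Prop :=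
  MeromorphicOn g Set.univ ∧ (∀ k : ℤ, RegularAt g (ωh τ t + (k : ℂ) * η)) ∧
  (∀ z, g (ωh τ t - z) = Complex.exp (lamh ν t * z / η) * g (ωh τ t + z))

/-- Conditions (i)–(iii) on a family `(c_j)_{|j|≤k}` of meromorphic coefficients. -/
def Conds (τ μ η : ℂ) (k : ℕ) (c : ℤ → ℂ → ℂ) : Prop :=
  (∀ j : ℤ, |j| ≤ (k : ℤ) → ∀ t : Fin 4, ∀ z : ℂ,
      c j (z + ωh τ t) = εh μ t ^ j * c (-j) (-z + ωh τ t)) ∧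
  ∃ r : ℤ → Fin 4 → ℤ → ℂ,
    (∀ j : ℤ, |j| ≤ (k : ℤ) → ∀ t : Fin 4, ∀ ℓ : ℤ,
        SimplePoleAt (c j) (ωh τ t - (ℓ : ℂ) * η) (r j t ℓ)) ∧
    (∀ j : ℤ, |j| ≤ (k : ℤ) → ∀ t : Fin 4, r j t j = 0) ∧
    (∀ j : ℤ, |j| ≤ (k : ℤ) → ∀ t : Fin 4, ∀ ℓ : ℤ, (k : ℤ) < |2 * ℓ - j| → r j t ℓ = 0) ∧
    (∀ j : ℤ, |j| ≤ (k : ℤ) → ∀ t : Fin 4, ∀ ℓ : ℤ, |2 * ℓ - j| ≤ (k : ℤ) →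
        r j t ℓ = -(εh μ t ^ (j - ℓ)) * r (2 * ℓ - j) t ℓ)

/-- `f` agrees near `p`, away from `p` itself, with an analytic function taking the value `v`
at `p`. -/
def HasRegularValue (f : ℂ → ℂ) (p v : ℂ) : Prop :=
  ∃ h : ℂ → ℂ, AnalyticAt ℂ h p ∧ h p = v ∧ f =ᶠ[nhdsWithin p {p}ᶜ] h

namespace HasRegularValue

open Topology

variable {f g : ℂ → ℂ} {p v w : ℂ}

theorem of_analyticAt (hf : AnalyticAt ℂ f p) : HasRegularValue f p (f p) :=
  ⟨f, hf, rfl, .rfl⟩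

theorem add (hf : HasRegularValue f p v) (hg : HasRegularValue g p w) :
    HasRegularValue (fun z => f z + g z) p (v + w) := by
  obtain ⟨F, hF, rfl, hfF⟩ := hf
  obtain ⟨G, hG, rfl, hgG⟩ := hg
  exact ⟨fun z => F z + G z, hF.add hG, rfl, hfF.add hgG⟩

theorem mul (hf : HasRegularValue f p v) (hg : HasRegularValue g p w) :
    HasRegularValue (fun z => f z * g z) p (v * w) := by
  obtain ⟨F, hF, rfl, hfF⟩ := hf
  obtain ⟨G, hG, rfl, hgG⟩ := hg
  exact ⟨fun z => F z * G z, hF.mul hG, rfl, hfF.mul hgG⟩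

theorem congr (hf : HasRegularValue f p v) (hfg : g =ᶠ[𝓝[≠] p] f) : HasRegularValue g p v := by
  obtain ⟨F, hF, hv, hfF⟩ := hf
  exact ⟨F, hF, hv, hfg.trans hfF⟩

theorem sum {ι : Type*} (s : Finset ι) {f : ι → ℂ → ℂ} {v : ι → ℂ}
    (hf : ∀ i ∈ s, HasRegularValue (f i) p (v i)) :
    HasRegularValue (fun z => ∑ i ∈ s, f i z) p (∑ i ∈ s, v i) := by
  classical
  induction s using Finset.induction_on with
  | empty => simpa using of_analyticAt (f := fun _ => (0 : ℂ)) (p := p) analyticAt_const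
  | insert a s ha ih =>
    simp only [Finset.sum_insert ha]
    exact (hf a (Finset.mem_insert_self a s)).add
      (ih fun i hi => hf i (Finset.mem_insert_of_mem hi))

theorem tendsto (hf : HasRegularValue f p v) : Tendsto f (𝓝[≠] p) (𝓝 v) := by
  obtain ⟨F, hF, rfl, hfF⟩ := hf
  exact (hF.continuousAt.tendsto.mono_left nhdsWithin_le_nhds).congr' hfF.symm

theorem unique (hf : HasRegularValue f p v) (hf' : HasRegularValue f p w) : v = w :=
  tendsto_nhds_unique hf.tendsto hf'.tendsto

theorem comp {φ : ℂ → ℂ} (hf : HasRegularValue f (φ p) v) (hφ : AnalyticAt ℂ φ p)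
    (hinj : Function.Injective φ) : HasRegularValue (fun z => f (φ z)) p v := by
  obtain ⟨F, hF, rfl, hfF⟩ := hf
  have ht : Tendsto φ (𝓝[≠] p) (𝓝[≠] (φ p)) :=
    tendsto_nhdsWithin_of_tendsto_nhds_of_eventually_within _
      (hφ.continuousAt.tendsto.mono_left nhdsWithin_le_nhds)
      (eventually_nhdsWithin_of_forall fun _ hz h => hz (hinj h))
  exact ⟨fun z => F (φ z), hF.comp hφ, rfl, ht.eventually hfF⟩

theorem of_mul_analyticAt {E : ℂ → ℂ} (hf : HasRegularValue (fun z => f z * E z) p v)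
    (hE : AnalyticAt ℂ E p) (hEp : E p ≠ 0) : HasRegularValue f p (v / E p) := by
  rw [div_eq_mul_inv]
  refine (hf.mul (of_analyticAt (hE.inv hEp))).congr ?_
  filter_upwards [(hE.continuousAt.eventually_ne hEp).filter_mono nhdsWithin_le_nhds] with z hz
  simp [hz]

end HasRegularValue

section RegularityCriteria

open Topology

theorem regularAt_iff_exists_hasRegularValue {f : ℂ → ℂ} {p : ℂ} :
    RegularAt f p ↔ ∃ v, HasRegularValue f p v :=
  ⟨fun ⟨h, hh, hfh⟩ => ⟨h p, h, hh, rfl, hfh⟩, fun ⟨_, h, hh, _, hfh⟩ => ⟨h, hh, hfh⟩⟩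

theorem simplePoleAt_iff_hasRegularValue {f : ℂ → ℂ} {p r : ℂ} :
    SimplePoleAt f p r ↔ HasRegularValue (fun z => (z - p) * f z) p r := by
  constructor
  · rintro ⟨h, hh, hfh⟩
    refine ⟨fun z => r + (z - p) * h z, by fun_prop, by simp, ?_⟩
    filter_upwards [hfh, self_mem_nhdsWithin] with z hz hzp
    have : z - p ≠ 0 := sub_ne_zero.2 hzp
    rw [hz]
    field_simp
  · rintro ⟨H, hH, rfl, hfH⟩
    obtain ⟨F, hF⟩ := hH
    refine ⟨dslope H p, hF.has_fpower_series_dslope_fslope.analyticAt, ?_⟩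
    filter_upwards [hfH, self_mem_nhdsWithin] with z hz hzp
    have hne : z - p ≠ 0 := sub_ne_zero.2 hzp
    rw [dslope_of_ne _ hzp, slope_def_field, ← hz]
    field_simp
    ring

theorem simplePoleAt_zero_iff_regularAt {f : ℂ → ℂ} {p : ℂ} :
    SimplePoleAt f p 0 ↔ RegularAt f p := by
  simp [SimplePoleAt, RegularAt]

theorem MeromorphicAt.exists_regularAt_pow_mul {f : ℂ → ℂ} {p : ℂ} (hf : MeromorphicAt f p) :
    ∃ n : ℕ, ∀ m ≥ n, RegularAt (fun z => (z - p) ^ m * f z) p := by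
  obtain ⟨n, hn⟩ := hf
  refine ⟨n, fun m hm => ⟨fun z => (z - p) ^ (m - n) * ((z - p) ^ n • f z), by fun_prop, ?_⟩⟩
  refine .of_forall fun z => ?_
  beta_reduce
  rw [smul_eq_mul, ← mul_assoc, ← pow_add, Nat.sub_add_cancel hm]

end RegularityCriteria

theorem exp_lamh {ν μ : ℂ} (hμ : μ = Complex.exp (8 * Real.pi * I * ν)) (t : Fin 4) :
    Complex.exp (lamh ν t) = εh μ t := by
  fin_cases t <;> simp [lamh, εh, hμ]

theorem exp_lamh_mul_int {ν μ : ℂ} (hμ : μ = Complex.exp (8 * Real.pi * I * ν)) (t : Fin 4)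
    (n : ℤ) : Complex.exp (lamh ν t * n) = εh μ t ^ n := by
  rw [← exp_lamh hμ t, ← Complex.exp_int_mul, mul_comm]

theorem εh_ne_zero {ν μ : ℂ} (hμ : μ = Complex.exp (8 * Real.pi * I * ν)) (t : Fin 4) :
    εh μ t ≠ 0 :=
  exp_lamh hμ t ▸ Complex.exp_ne_zero _

theorem int_add_int_mul_ne_int_mul {τ η : ℂ} (hτ : 0 < τ.im)
    (hgen : ∀ n : ℕ, 0 < n → ¬ ∃ m l : ℤ, (n : ℂ) * η = (m : ℂ) + τ * l)
    (a b n : ℤ) (hab : a ≠ 0 ∨ b ≠ 0) : (a : ℂ) + b * τ ≠ n * η := by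
  intro h
  rcases lt_trichotomy n 0 with hn | rfl | hn
  · refine hgen n.natAbs (by omega) ⟨-a, -b, ?_⟩
    rw [show ((n.natAbs : ℕ) : ℂ) = ((n.natAbs : ℤ) : ℂ) from (Int.cast_natCast _).symm,
      show (n.natAbs : ℤ) = -n by omega]
    push_cast
    linear_combination h
  · have him := congrArg Complex.im h
    have hre := congrArg Complex.re h
    simp at him hre
    have hb : b = 0 := him.resolve_right hτ.ne'
    subst hb
    simp at hre hab
    exact hab hre
  · refine hgen n.natAbs (by omega) ⟨a, b, ?_⟩
    rw [show ((n.natAbs : ℕ) : ℂ) = ((n.natAbs : ℤ) : ℂ) from (Int.cast_natCast _).symm,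
      show (n.natAbs : ℤ) = n by omega]
    linear_combination -h

section Operator

open Topology

variable {τ η ν μ : ℂ} {k : ℕ} {c : ℤ → ℂ → ℂ}

/-- A member of `ℳ_t` supported on two points symmetric about `ω_t`. -/
theorem memM_pairIndicator [DecidableEq ℂ] (t : Fin 4) {w : ℂ} (hw : w ≠ 0) :
    memM τ η ν t (fun x => if x = ωh τ t + w then 1 else
      if x = ωh τ t - w then Complex.exp (lamh ν t * w / η) else 0) := by
  set g : ℂ → ℂ := fun x => if x = ωh τ t + w then 1 else
    if x = ωh τ t - w then Complex.exp (lamh ν t * w / η) else 0 with hg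
  have hzero : ∀ p, g =ᶠ[𝓝[≠] p] fun _ => 0 := by
    intro p
    have hne : ∀ a, ∀ᶠ z in 𝓝[≠] p, z ≠ a := by
      intro a
      rcases eq_or_ne a p with rfl | ha
      · exact self_mem_nhdsWithin
      · exact (continuousAt_id.eventually_ne ha.symm).filter_mono nhdsWithin_le_nhds
    filter_upwards [hne (ωh τ t + w), hne (ωh τ t - w)] with z h₁ h₂
    simp [hg, h₁, h₂]
  refine ⟨fun p _ => (MeromorphicAt.const 0 p).congr (hzero p).symm,
    fun m => ⟨fun _ => 0, analyticAt_const, hzero _⟩, fun z => ?_⟩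
  have e₁ : ωh τ t - z = ωh τ t + w ↔ z = -w := by
    constructor <;> intro h <;> linear_combination -h
  have e₂ : ωh τ t - z = ωh τ t - w ↔ z = w := by
    constructor <;> intro h <;> linear_combination -h
  have e₃ : ωh τ t + z = ωh τ t + w ↔ z = w := by simp
  have e₄ : ωh τ t + z = ωh τ t - w ↔ z = -w := by
    constructor <;> intro h <;> linear_combination h
  have hww : w ≠ -w := fun h => hw (self_eq_neg.1 h)
  simp only [hg, e₁, e₂, e₃, e₄]
  rcases eq_or_ne z w with rfl | h₁
  · simp [hww]
  · rcases eq_or_ne z (-w) with rfl | h₂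
    · simp only [if_true, h₁, if_false, ← Complex.exp_add]
      rw [← Complex.exp_zero]
      congr 1
      ring
    · simp [h₁, h₂]

theorem coeff_reflect_of_generic (hη : η ≠ 0) (hμ : μ = Complex.exp (8 * Real.pi * I * ν))
    {t : Fin 4}
    (hA : ∀ g : ℂ → ℂ, memM τ η ν t g → memM τ η ν t
      (fun z => ∑ j ∈ Finset.Icc (-(k : ℤ)) (k : ℤ), c j z * g (z + (j : ℂ) * η)))
    {z : ℂ} (hz : ∀ n : ℤ, 2 * z ≠ n * η) {j : ℤ} (hj : |j| ≤ (k : ℤ)) :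
    c j (ωh τ t + z) = εh μ t ^ j * c (-j) (ωh τ t - z) := by
  classical
  set w : ℂ := z + j * η with hwdef
  have hw : w ≠ 0 := fun h => hz (-2 * j) (by push_cast; linear_combination 2 * h - 2 * hwdef)
  have hj' := abs_le.1 hj
  have h := (hA _ (memM_pairIndicator t hw)).2.2 z
  have h₁ : ∀ i : ℤ, ωh τ t - z + i * η ≠ ωh τ t + w := fun i h =>
    hz (i - j) (by push_cast; linear_combination -h - hwdef)
  have h₂ : ∀ i : ℤ, ωh τ t - z + i * η = ωh τ t - w ↔ i = -j := fun i => by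
    rw [hwdef]
    refine ⟨fun h => ?_, by rintro rfl; push_cast; ring⟩
    have : ((i : ℂ) - ((-j : ℤ) : ℂ)) * η = 0 := by push_cast; linear_combination h
    exact_mod_cast sub_eq_zero.1 ((mul_eq_zero.1 this).resolve_right hη)
  have h₃ : ∀ i : ℤ, ωh τ t + z + i * η = ωh τ t + w ↔ i = j := fun i => by
    rw [hwdef]
    refine ⟨fun h => ?_, by rintro rfl; ring⟩
    have : ((i : ℂ) - (j : ℂ)) * η = 0 := by linear_combination h
    exact_mod_cast sub_eq_zero.1 ((mul_eq_zero.1 this).resolve_right hη)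
  have h₄ : ∀ i : ℤ, ωh τ t + z + i * η ≠ ωh τ t - w := fun i h =>
    hz (-i - j) (by push_cast; linear_combination h - hwdef)
  simp only [h₁, h₂, h₃, h₄, if_false, mul_ite, mul_one, mul_zero, Finset.sum_ite_eq',
    Finset.mem_Icc] at h
  rw [if_pos (by omega), if_pos (by omega)] at h
  have he : Complex.exp (lamh ν t * w / η) = Complex.exp (lamh ν t * z / η) * εh μ t ^ j := by
    rw [← exp_lamh_mul_int hμ, ← Complex.exp_add, hwdef]
    congr 1
    field_simp
  rw [he] at h
  refine mul_left_cancel₀ (Complex.exp_ne_zero (lamh ν t * z / η)) ?_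
  rw [← h]
  ring

/-- The reflection symmetry holds also at the non-generic points: each reflection
`p ↦ 2ω_t - p` is the product of the other three. -/
theorem coeff_reflect (hτ : 0 < τ.im) (hη : η ≠ 0)
    (hgen : ∀ n : ℕ, 0 < n → ¬ ∃ m l : ℤ, (n : ℂ) * η = (m : ℂ) + τ * l)
    (hμ : μ = Complex.exp (8 * Real.pi * I * ν))
    (hA : ∀ t : Fin 4, ∀ g : ℂ → ℂ, memM τ η ν t g → memM τ η ν t
      (fun z => ∑ j ∈ Finset.Icc (-(k : ℤ)) (k : ℤ), c j z * g (z + (j : ℂ) * η)))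
    {j : ℤ} (hj : |j| ≤ (k : ℤ)) (t : Fin 4) (z : ℂ) :
    c j (ωh τ t + z) = εh μ t ^ j * c (-j) (ωh τ t - z) := by
  by_cases hz : ∀ n : ℤ, 2 * z ≠ n * η
  · exact coeff_reflect_of_generic hη hμ (hA t) hz hj
  push Not at hz
  obtain ⟨n, hn⟩ := hz
  have key : ∀ (i : ℤ), |i| ≤ (k : ℤ) → ∀ (s : Fin 4) (p q : ℂ) (a b e : ℤ),
      (a ≠ 0 ∨ b ≠ 0) → 2 * (p - ωh τ s) = a + b * τ + e * (2 * z) → p + q = 2 * ωh τ s →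
      c i p = εh μ s ^ i * c (-i) q := by
    intro i hi s p q a b e hab hp hpq
    have := coeff_reflect_of_generic (z := p - ωh τ s) hη hμ (hA s) (fun m hm =>
      int_add_int_mul_ne_int_mul hτ hgen a b (m - e * n) hab (by
        push_cast
        linear_combination hm - hp - e * hn)) hi
    rwa [add_sub_cancel, show ωh τ s - (p - ωh τ s) = q by linear_combination -hpq] at this
  have hj' : |-j| ≤ (k : ℤ) := by rwa [abs_neg]
  have hμ0 : μ ≠ 0 := hμ ▸ Complex.exp_ne_zero _
  have hμj : μ ^ j ≠ 0 := zpow_ne_zero _ hμ0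
  fin_cases t
  · have e₁ := key j hj 3 z (τ - z) 0 (-1) 1 (by simp)
      (by simp [ωh]; ring) (by simp [ωh]; ring)
    have e₂ := key (-j) hj' 2 (τ - z) (1 + z) (-1) 1 (-1) (by simp)
      (by simp [ωh]; ring) (by simp [ωh]; ring)
    have e₃ := key j hj 1 (1 + z) (-z) 1 0 1 (by simp)
      (by simp [ωh]; ring) (by simp [ωh])
    rw [neg_neg] at e₂
    simp [ωh, εh] at e₁ e₂ e₃ ⊢
    rw [e₁, e₂, e₃]
    field_simp
  · have e₁ := key j hj 0 (1 / 2 + z) (-1 / 2 - z) 1 0 1 (by simp)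
      (by simp [ωh]; ring) (by simp [ωh]; ring)
    have e₂ := key (-j) hj' 3 (-1 / 2 - z) (τ + 1 / 2 + z) (-1) (-1) (-1) (by simp)
      (by simp [ωh]; ring) (by simp [ωh]; ring)
    have e₃ := key j hj 2 (τ + 1 / 2 + z) (1 / 2 - z) 0 1 1 (by simp)
      (by simp [ωh]; ring) (by simp [ωh]; ring)
    rw [neg_neg] at e₂
    simp [ωh, εh] at e₁ e₂ e₃ ⊢
    rw [e₁, e₂, e₃]
    field_simp
  · have e₁ := key j hj 1 ((1 + τ) / 2 + z) ((1 - τ) / 2 - z) 0 1 1 (by simp)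
      (by simp [ωh]; ring) (by simp [ωh]; ring)
    have e₂ := key (-j) hj' 0 ((1 - τ) / 2 - z) ((τ - 1) / 2 + z) 1 (-1) (-1) (by simp)
      (by simp [ωh]; ring) (by simp [ωh]; ring)
    have e₃ := key j hj 3 ((τ - 1) / 2 + z) ((1 + τ) / 2 - z) (-1) 0 1 (by simp)
      (by simp [ωh]; ring) (by simp [ωh]; ring)
    rw [neg_neg] at e₂
    simp [ωh, εh] at e₁ e₂ e₃ ⊢
    rw [e₁, e₂, e₃]
  · have e₁ := key j hj 2 (τ / 2 + z) (1 + τ / 2 - z) (-1) 0 1 (by simp)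
      (by simp [ωh]; ring) (by simp [ωh]; ring)
    have e₂ := key (-j) hj' 1 (1 + τ / 2 - z) (-τ / 2 + z) 1 1 (-1) (by simp)
      (by simp [ωh]; ring) (by simp [ωh]; ring)
    have e₃ := key j hj 0 (-τ / 2 + z) (τ / 2 - z) 0 (-1) 1 (by simp)
      (by simp [ωh]; ring) (by simp [ωh]; ring)
    rw [neg_neg] at e₂
    simp [ωh, εh] at e₁ e₂ e₃ ⊢
    rw [e₁, e₂, e₃]

theorem memM_of_even (hη : η ≠ 0) (t : Fin 4) {P : ℂ → ℂ} (hP : ∀ z, AnalyticAt ℂ P z)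
    (heven : ∀ z, P (-z) = P z) :
    memM τ η ν t
      (fun z => Complex.exp (-(lamh ν t * (z - ωh τ t) / (2 * η))) * P (z - ωh τ t)) := by
  have han : ∀ p, AnalyticAt ℂ
      (fun z => Complex.exp (-(lamh ν t * (z - ωh τ t) / (2 * η))) * P (z - ωh τ t)) p := by
    intro p
    have h₁ : AnalyticAt ℂ (fun z => P (z - ωh τ t)) p :=
      (hP (p - ωh τ t)).comp (f := fun z => z - ωh τ t) (by fun_prop)
    have h₂ : AnalyticAt ℂ (fun z => Complex.exp (-(lamh ν t * (z - ωh τ t) / (2 * η)))) p := by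
      simp only [div_eq_mul_inv]
      fun_prop
    exact h₂.mul h₁
  refine ⟨fun p _ => (han p).meromorphicAt, fun m => ⟨_, han _, .of_forall fun _ => rfl⟩,
    fun z => ?_⟩
  simp only [sub_sub_cancel_left, add_sub_cancel_left, heven]
  rw [← mul_assoc, ← Complex.exp_add]
  congr 2
  field_simp
  ring

/-- Testing the invariance of `ℳ_t` on a function vanishing to high order at all relevant points
except `ω_t ± iη`. -/
theorem exists_test_function (hη : η ≠ 0)
    (hc : ∀ j : ℤ, |j| ≤ (k : ℤ) → MeromorphicOn (c j) Set.univ)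
    (hμ : μ = Complex.exp (8 * Real.pi * I * ν)) (t : Fin 4)
    (hA : ∀ g : ℂ → ℂ, memM τ η ν t g → memM τ η ν t
      (fun z => ∑ j ∈ Finset.Icc (-(k : ℤ)) (k : ℤ), c j z * g (z + (j : ℂ) * η)))
    (ℓ i : ℤ) :
    ∃ g : ℂ → ℂ, (∀ z, AnalyticAt ℂ g z) ∧ g (ωh τ t + i * η) ≠ 0 ∧
      g (ωh τ t - i * η) = εh μ t ^ i * g (ωh τ t + i * η) ∧
      ∀ Q : ℂ → ℂ, (∀ z, AnalyticAt ℂ Q z) → (∀ z, Q (-z) = Q z) →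
        RegularAt (fun z => ∑ j ∈ (Finset.Icc (-(k : ℤ)) (k : ℤ)).filter
            (fun j => j - ℓ = i ∨ j - ℓ = -i),
          c j z * (g (z + j * η) * Q (z + j * η - ωh τ t))) (ωh τ t - ℓ * η) := by
  classical
  set p : ℂ := ωh τ t - ℓ * η with hp
  set S := Finset.Icc (-(k : ℤ)) (k : ℤ) with hS
  have hN : ∃ N : ℕ, ∀ j ∈ S, RegularAt (fun z => (z - p) ^ N * c j z) p := by
    have : ∀ j : ℤ, ∃ n : ℕ, j ∈ S → ∀ m ≥ n, RegularAt (fun z => (z - p) ^ m * c j z) p := by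
      intro j
      by_cases hj : j ∈ S
      · obtain ⟨n, hn⟩ := MeromorphicAt.exists_regularAt_pow_mul
          (hc j (abs_le.2 (Finset.mem_Icc.1 hj)) p trivial)
        exact ⟨n, fun _ => hn⟩
      · exact ⟨0, fun h => absurd h hj⟩
    choose n hn using this
    exact ⟨S.sup n, fun j hj => hn j hj _ (Finset.le_sup hj)⟩
  obtain ⟨N, hN⟩ := hN
  set T := S.filter (fun j => ¬ (j - ℓ = i ∨ j - ℓ = -i)) with hT
  set P : ℂ → ℂ := fun x => ∏ j ∈ T, (x ^ 2 - (((j - ℓ : ℤ) : ℂ) * η) ^ 2) ^ N with hPdef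
  have hPan : ∀ z, AnalyticAt ℂ P z := by
    intro z
    simp only [hPdef]
    exact Finset.analyticAt_fun_prod _ fun j _ => by fun_prop
  have hPeven : ∀ z, P (-z) = P z := fun z => by simp [hPdef]
  set E : ℂ → ℂ := fun z => Complex.exp (-(lamh ν t * (z - ωh τ t) / (2 * η))) with hE
  have hEan : ∀ z, AnalyticAt ℂ E z := fun z => by
    simp only [hE, div_eq_mul_inv]
    fun_prop
  have hg : ∀ Q : ℂ → ℂ, (∀ z, AnalyticAt ℂ Q z) → ∀ z,
      AnalyticAt ℂ (fun z => E z * (P (z - ωh τ t) * Q (z - ωh τ t))) z := fun Q hQ z =>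
    (hEan z).mul (((hPan _).comp (f := fun z => z - ωh τ t) (by fun_prop)).mul
      ((hQ _).comp (f := fun z => z - ωh τ t) (by fun_prop)))
  refine ⟨fun z => E z * P (z - ωh τ t), fun z => ?_, ?_, ?_, ?_⟩
  · simpa using hg (fun _ => 1) (fun _ => analyticAt_const) z
  · refine mul_ne_zero (Complex.exp_ne_zero _) (Finset.prod_ne_zero_iff.2 fun j hj => ?_)
    refine pow_ne_zero _ fun h => (Finset.mem_filter.1 hj).2 ?_
    rw [add_sub_cancel_left, sub_eq_zero, sq_eq_sq_iff_eq_or_eq_neg] at h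
    rcases h with h | h
    · left
      exact_mod_cast (mul_right_cancel₀ hη h).symm
    · right
      rw [← neg_mul] at h
      have := mul_right_cancel₀ hη h
      rw [eq_neg_iff_add_eq_zero, add_comm, ← eq_neg_iff_add_eq_zero] at this
      exact_mod_cast this
  · simp only [sub_sub_cancel_left, add_sub_cancel_left, hPeven, hE]
    rw [← mul_assoc, ← exp_lamh_mul_int hμ, ← Complex.exp_add]
    congr 2
    field_simp
    ring
  · intro Q hQ hQe
    have hmem : memM τ η ν t (fun z => E z * (P (z - ωh τ t) * Q (z - ωh τ t))) :=
      memM_of_even hη t (P := fun x => P x * Q x) (fun z => (hPan z).mul (hQ z))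
        (fun z => by rw [hPeven, hQe])
    have hreg := (hA _ hmem).2.1 (-ℓ)
    rw [show ωh τ t + ((-ℓ : ℤ) : ℂ) * η = p by rw [hp]; push_cast; ring] at hreg
    obtain ⟨v, hv⟩ := regularAt_iff_exists_hasRegularValue.1 hreg
    have hrest : ∀ j ∈ T, ∃ v, HasRegularValue (fun z => -1 * (c j z *
        (E (z + j * η) * (P (z + j * η - ωh τ t) * Q (z + j * η - ωh τ t))))) p v := by
      intro j hj
      obtain ⟨u, hu⟩ := regularAt_iff_exists_hasRegularValue.1 (hN j (Finset.mem_filter.1 hj).1)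
      set R : ℂ → ℂ := fun z => -1 * (E (z + j * η) * Q (z + j * η - ωh τ t) *
        ((z - p + 2 * (((j - ℓ : ℤ) : ℂ) * η)) ^ N *
          ∏ m ∈ T.erase j, ((z + j * η - ωh τ t) ^ 2 - (((m - ℓ : ℤ) : ℂ) * η) ^ 2) ^ N)) with hR
      have hRan : AnalyticAt ℂ R p := by
        refine analyticAt_const.mul ((((hEan _).comp (f := fun z => z + j * η)
          (by fun_prop)).mul ((hQ _).comp (f := fun z => z + j * η - ωh τ t)
          (by fun_prop))).mul (AnalyticAt.mul (by fun_prop) ?_))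
        exact Finset.analyticAt_fun_prod _ fun m _ => by fun_prop
      refine ⟨_, (hu.mul (.of_analyticAt hRan)).congr (.of_forall fun z => ?_)⟩
      simp only [hR, hPdef]
      rw [← Finset.mul_prod_erase T _ hj,
        show (z + j * η - ωh τ t) ^ 2 - (((j - ℓ : ℤ) : ℂ) * η) ^ 2 =
          (z - p) * (z - p + 2 * (((j - ℓ : ℤ) : ℂ) * η)) by rw [hp]; push_cast; ring, mul_pow]
      ring
    choose! u hu using hrest
    refine regularAt_iff_exists_hasRegularValue.2
      ⟨_, (hv.add (HasRegularValue.sum T hu)).congr (.of_forall fun z => ?_)⟩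
    beta_reduce
    rw [← Finset.sum_filter_add_sum_filter_not S (fun j => j - ℓ = i ∨ j - ℓ = -i), ← hT,
      add_assoc, ← Finset.sum_add_distrib]
    simp [mul_assoc]

theorem regularAt_of_partner_out_of_range (hη : η ≠ 0)
    (hc : ∀ j : ℤ, |j| ≤ (k : ℤ) → MeromorphicOn (c j) Set.univ)
    (hμ : μ = Complex.exp (8 * Real.pi * I * ν)) (t : Fin 4)
    (hA : ∀ g : ℂ → ℂ, memM τ η ν t g → memM τ η ν t
      (fun z => ∑ j ∈ Finset.Icc (-(k : ℤ)) (k : ℤ), c j z * g (z + (j : ℂ) * η)))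
    {j ℓ : ℤ} (hj : |j| ≤ (k : ℤ)) (h : j = ℓ ∨ (k : ℤ) < |2 * ℓ - j|) :
    RegularAt (c j) (ωh τ t - ℓ * η) := by
  obtain ⟨g, hgan, hg0, -, hreg⟩ := exists_test_function hη hc hμ t hA ℓ (j - ℓ)
  have hs : (Finset.Icc (-(k : ℤ)) (k : ℤ)).filter
      (fun i => i - ℓ = j - ℓ ∨ i - ℓ = -(j - ℓ)) = {j} := by
    ext i
    rw [abs_le] at hj
    rw [lt_abs] at h
    simp only [Finset.mem_filter, Finset.mem_Icc, Finset.mem_singleton]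
    omega
  have h₁ := hreg (fun _ => 1) (fun _ => analyticAt_const) (fun _ => rfl)
  simp only [hs, Finset.sum_singleton, mul_one] at h₁
  obtain ⟨v, hv⟩ := regularAt_iff_exists_hasRegularValue.1 h₁
  refine regularAt_iff_exists_hasRegularValue.2 ⟨_, hv.of_mul_analyticAt
    ((hgan _).comp (f := fun z => z + j * η) (by fun_prop)) ?_⟩
  simpa only [show ωh τ t - ℓ * η + j * η = ωh τ t + ((j - ℓ : ℤ) : ℂ) * η by push_cast; ring]
    using hg0

theorem simplePoles_of_partners (hη : η ≠ 0)
    (hc : ∀ j : ℤ, |j| ≤ (k : ℤ) → MeromorphicOn (c j) Set.univ)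
    (hμ : μ = Complex.exp (8 * Real.pi * I * ν)) (t : Fin 4)
    (hA : ∀ g : ℂ → ℂ, memM τ η ν t g → memM τ η ν t
      (fun z => ∑ j ∈ Finset.Icc (-(k : ℤ)) (k : ℤ), c j z * g (z + (j : ℂ) * η)))
    {j ℓ : ℤ} (hj : |j| ≤ (k : ℤ)) (hne : j ≠ ℓ) (hj₂ : |2 * ℓ - j| ≤ (k : ℤ)) :
    (∃ r, SimplePoleAt (c j) (ωh τ t - ℓ * η) r) ∧
    ∀ r r', SimplePoleAt (c j) (ωh τ t - ℓ * η) r →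
      SimplePoleAt (c (2 * ℓ - j)) (ωh τ t - ℓ * η) r' → r = -(εh μ t ^ (j - ℓ)) * r' := by
  obtain ⟨g, hgan, hg0, hgs, hreg⟩ := exists_test_function hη hc hμ t hA ℓ (j - ℓ)
  have hs : (Finset.Icc (-(k : ℤ)) (k : ℤ)).filter
      (fun i => i - ℓ = j - ℓ ∨ i - ℓ = -(j - ℓ)) = {j, 2 * ℓ - j} := by
    ext i
    rw [abs_le] at hj hj₂
    simp only [Finset.mem_filter, Finset.mem_Icc, Finset.mem_singleton, Finset.mem_insert]
    omega
  have hne' : j ≠ 2 * ℓ - j := by omega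
  set p : ℂ := ωh τ t - ℓ * η with hp
  set d : ℂ := ((j - ℓ : ℤ) : ℂ) * η with hd
  have hd0 : d ≠ 0 := mul_ne_zero (Int.cast_ne_zero.2 (sub_ne_zero.2 hne)) hη
  have h₁ := hreg (fun _ => 1) (fun _ => analyticAt_const) (fun _ => rfl)
  have h₂ := hreg (fun x => x ^ 2 - d ^ 2) (fun _ => by fun_prop) (fun _ => by simp)
  simp only [hs, Finset.sum_pair hne', mul_one] at h₁ h₂
  obtain ⟨v₁, hv₁⟩ := regularAt_iff_exists_hasRegularValue.1 h₁
  obtain ⟨v₂, hv₂⟩ := regularAt_iff_exists_hasRegularValue.1 h₂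
  have hEan : ∀ m : ℤ, AnalyticAt ℂ (fun z => g (z + m * η)) p := fun m =>
    (hgan _).comp (f := fun z => z + m * η) (by fun_prop)
  have hp₁ : p + j * η = ωh τ t + d := by rw [hp, hd]; push_cast; ring
  have hp₂ : p + ((2 * ℓ - j : ℤ) : ℂ) * η = ωh τ t - d := by rw [hp, hd]; push_cast; ring
  constructor
  · have hx : ∀ f : ℂ → ℂ, AnalyticAt ℂ f p → HasRegularValue f p (f p) := fun f hf =>
      .of_analyticAt hf
    have hsum := (hv₂.mul (hx (fun _ => (4 * d)⁻¹) analyticAt_const)).add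
      (hv₁.mul (hx (fun z => (z - p) * (2 * d - (z - p)) * (4 * d)⁻¹) (by fun_prop)))
    refine ⟨_, simplePoleAt_iff_hasRegularValue.2
      (HasRegularValue.of_mul_analyticAt (hsum.congr (.of_forall fun z => ?_)) (hEan j) ?_)⟩
    · have e₁ : z + j * η - ωh τ t = z - p + d := by rw [hp, hd]; push_cast; ring
      have e₂ : z + ((2 * ℓ - j : ℤ) : ℂ) * η - ωh τ t = z - p - d := by
        rw [hp, hd]; push_cast; ring
      simp only [e₁, e₂]
      field_simp
      ring
    · simpa only [hp₁] using hg0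
  · intro r r' hr hr'
    have hr := (simplePoleAt_iff_hasRegularValue.1 hr).mul (.of_analyticAt (hEan j))
    have hr' := (simplePoleAt_iff_hasRegularValue.1 hr').mul (.of_analyticAt (hEan (2 * ℓ - j)))
    have hz := (HasRegularValue.of_analyticAt (f := fun z => z - p) (p := p)
      (by fun_prop)).mul hv₁
    have := hz.unique ((hr.add hr').congr (.of_forall fun z => by ring))
    simp only [hp₁, hp₂, hgs, sub_self, zero_mul] at this
    refine mul_right_cancel₀ hg0 ?_
    linear_combination -this

theorem conds_of_memM_map (hτ : 0 < τ.im) (hη : η ≠ 0)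
    (hgen : ∀ n : ℕ, 0 < n → ¬ ∃ m l : ℤ, (n : ℂ) * η = (m : ℂ) + τ * l)
    (hμ : μ = Complex.exp (8 * Real.pi * I * ν))
    (hc : ∀ j : ℤ, |j| ≤ (k : ℤ) → MeromorphicOn (c j) Set.univ)
    (hA : ∀ t : Fin 4, ∀ g : ℂ → ℂ, memM τ η ν t g → memM τ η ν t
      (fun z => ∑ j ∈ Finset.Icc (-(k : ℤ)) (k : ℤ), c j z * g (z + (j : ℂ) * η))) :
    Conds τ μ η k c := by
  refine ⟨fun j hj t z => ?_, ?_⟩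
  · rw [add_comm z, neg_add_eq_sub]
    exact coeff_reflect hτ hη hgen hμ hA hj t z
  have hreg : ∀ j : ℤ, |j| ≤ (k : ℤ) → ∀ (t : Fin 4) (ℓ : ℤ), (j = ℓ ∨ (k : ℤ) < |2 * ℓ - j|) →
      SimplePoleAt (c j) (ωh τ t - ℓ * η) 0 := fun j hj t ℓ h =>
    simplePoleAt_zero_iff_regularAt.2
      (regularAt_of_partner_out_of_range hη hc hμ t (hA t) hj h)
  have hex : ∀ (j : ℤ) (t : Fin 4) (ℓ : ℤ), ∃ r, |j| ≤ (k : ℤ) →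
      SimplePoleAt (c j) (ωh τ t - ℓ * η) r := by
    intro j t ℓ
    by_cases hj : |j| ≤ (k : ℤ)
    · by_cases h : j = ℓ ∨ (k : ℤ) < |2 * ℓ - j|
      · exact ⟨0, fun _ => hreg j hj t ℓ h⟩
      · push Not at h
        obtain ⟨r, hr⟩ := (simplePoles_of_partners hη hc hμ t (hA t) hj h.1 h.2).1
        exact ⟨r, fun _ => hr⟩
    · exact ⟨0, fun h => absurd h hj⟩
  choose r hr using hex
  have hzero : ∀ j : ℤ, |j| ≤ (k : ℤ) → ∀ (t : Fin 4) (ℓ : ℤ), (j = ℓ ∨ (k : ℤ) < |2 * ℓ - j|) →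
      r j t ℓ = 0 := fun j hj t ℓ h =>
    (simplePoleAt_iff_hasRegularValue.1 (hr j t ℓ hj)).unique
      (simplePoleAt_iff_hasRegularValue.1 (hreg j hj t ℓ h))
  refine ⟨r, fun j hj t ℓ => hr j t ℓ hj, fun j hj t => hzero j hj t j (.inl rfl),
    fun j hj t ℓ h => hzero j hj t ℓ (.inr h), fun j hj t ℓ h => ?_⟩
  by_cases hjl : j = ℓ
  · subst hjl
    rw [show 2 * j - j = j by ring, hzero j hj t j (.inl rfl), mul_zero]
  · exact (simplePoles_of_partners hη hc hμ t (hA t) hj hjl h).2 _ _ (hr j t ℓ hj) (hr _ t ℓ h)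

theorem memM_map_of_conds (hη : η ≠ 0) (hμ : μ = Complex.exp (8 * Real.pi * I * ν))
    (hc : ∀ j : ℤ, |j| ≤ (k : ℤ) → MeromorphicOn (c j) Set.univ)
    (hcond : Conds τ μ η k c) {t : Fin 4} {g : ℂ → ℂ} (hg : memM τ η ν t g) :
    memM τ η ν t
      (fun z => ∑ j ∈ Finset.Icc (-(k : ℤ)) (k : ℤ), c j z * g (z + (j : ℂ) * η)) := by
  obtain ⟨hsymm, r, hpole, -, hout, hpair⟩ := hcond
  obtain ⟨hgm, hgr, hgs⟩ := hg
  have hmem : ∀ {j : ℤ}, j ∈ Finset.Icc (-(k : ℤ)) (k : ℤ) → |j| ≤ (k : ℤ) := fun h =>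
    abs_le.2 (Finset.mem_Icc.1 h)
  have hε := εh_ne_zero hμ t
  refine ⟨fun p _ => ?_, fun m => ?_, fun z => ?_⟩
  · refine MeromorphicAt.fun_sum fun j hj => ?_
    refine (hc j (hmem hj) p trivial).mul ?_
    exact (hgm (p + j * η) trivial).comp_analyticAt (f := g) (g := fun z => z + j * η)
      (by fun_prop)
  · choose v hv using fun n => regularAt_iff_exists_hasRegularValue.1 (hgr n)
    have hvs : ∀ n : ℤ, v (-n) = εh μ t ^ n * v n := by
      intro n
      have h₁ : HasRegularValue (fun z => g (2 * ωh τ t - z)) (ωh τ t + n * η) (v (-n)) := by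
        refine HasRegularValue.comp (φ := fun z => 2 * ωh τ t - z) ?_ (by fun_prop)
          sub_right_injective
        convert hv (-n) using 1
        push_cast
        ring
      have h₂ := (HasRegularValue.of_analyticAt
        (f := fun z => Complex.exp (lamh ν t * (z - ωh τ t) / η)) (p := ωh τ t + n * η)
        (by simp only [div_eq_mul_inv]; fun_prop)).mul (hv n)
      have h := h₁.unique (h₂.congr (.of_forall fun z => by
        have := hgs (z - ωh τ t)
        rwa [add_sub_cancel, show ωh τ t - (z - ωh τ t) = 2 * ωh τ t - z by ring] at this))
      rw [h, ← exp_lamh_mul_int hμ]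
      congr 2
      field_simp
      ring
    set ℓ : ℤ := -m with hℓ
    have hp : ωh τ t + m * η = ωh τ t - ℓ * η := by rw [hℓ]; push_cast; ring
    rw [hp]
    have hsum : HasRegularValue (fun z => ∑ j ∈ Finset.Icc (-(k : ℤ)) (k : ℤ),
        (z - (ωh τ t - ℓ * η)) * c j z * g (z + (j : ℂ) * η)) (ωh τ t - ℓ * η)
        (∑ j ∈ Finset.Icc (-(k : ℤ)) (k : ℤ), r j t ℓ * v (j - ℓ)) := by
      refine HasRegularValue.sum _ fun j hj =>
        (simplePoleAt_iff_hasRegularValue.1 (hpole j (hmem hj) t ℓ)).mul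
          (HasRegularValue.comp (φ := fun z => z + j * η) ?_ (by fun_prop)
            (add_left_injective _))
      convert hv (j - ℓ) using 1
      push_cast
      ring
    have hzero : ∑ j ∈ Finset.Icc (-(k : ℤ)) (k : ℤ), r j t ℓ * v (j - ℓ) = 0 := by
      rw [← Finset.sum_filter_of_ne (p := fun j => |2 * ℓ - j| ≤ (k : ℤ))]
      · rw [← self_eq_neg, ← Finset.sum_neg_distrib]
        refine Finset.sum_nbij' (fun j => 2 * ℓ - j) (fun j => 2 * ℓ - j) ?_ ?_ ?_ ?_ ?_
        · intro j hj
          simp only [Finset.mem_filter, Finset.mem_Icc, abs_le] at hj ⊢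
          omega
        · intro j hj
          simp only [Finset.mem_filter, Finset.mem_Icc, abs_le] at hj ⊢
          omega
        · intro j _
          ring
        · intro j _
          ring
        · intro j hj
          rw [Finset.mem_filter] at hj
          rw [hpair j (hmem hj.1) t ℓ hj.2, show 2 * ℓ - j - ℓ = -(j - ℓ) by ring, hvs]
          ring
      · intro j hj hne
        by_contra hlt
        exact hne (by rw [hout j (hmem hj) t ℓ (not_le.1 hlt), zero_mul])
    rw [hzero] at hsum
    refine simplePoleAt_zero_iff_regularAt.1 (simplePoleAt_iff_hasRegularValue.2
      (hsum.congr (.of_forall fun z => ?_)))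
    simp only [Finset.mul_sum, mul_assoc]
  · rw [Finset.mul_sum]
    refine Finset.sum_nbij' (fun j => -j) (fun j => -j) ?_ ?_ ?_ ?_ ?_
    · intro j hj
      rw [Finset.mem_Icc] at hj ⊢
      omega
    · intro j hj
      rw [Finset.mem_Icc] at hj ⊢
      omega
    · simp
    · simp
    · intro j hj
      have h₁ := hsymm j (hmem hj) t (-z)
      have h₂ := hgs (z - j * η)
      rw [neg_neg, neg_add_eq_sub, add_comm z] at h₁
      rw [show ωh τ t - z + j * η = ωh τ t - (z - j * η) by ring, h₁, h₂,
        show ωh τ t + (z - j * η) = ωh τ t + z + ((-j : ℤ) : ℂ) * η by push_cast; ring,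
        show lamh ν t * (z - j * η) / η = lamh ν t * z / η + lamh ν t * ((-j : ℤ) : ℂ) by
          push_cast; field_simp; ring, Complex.exp_add, exp_lamh_mul_int hμ, zpow_neg]
      field_simp

end Operator

/-- the difference operator `A = ∑_{j=-k}^k c_j(z) exp(jη∂_z)` maps every
space `ℳ_t` into itself if and only if the coefficients satisfy conditions (i)–(iii). -/
theorem statement2 (τ : ℂ) (hτ : 0 < τ.im) (η : ℂ) (hη : η ≠ 0)
    (hgen : ∀ n : ℕ, 0 < n → ¬ ∃ m l : ℤ, (n : ℂ) * η = (m : ℂ) + τ * l)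
    (ν : ℂ) (μ : ℂ) (hμ : μ = Complex.exp (8 * Real.pi * I * ν))
    (k : ℕ) (hk : 1 ≤ k) (c : ℤ → ℂ → ℂ)
    (hc : ∀ j : ℤ, |j| ≤ (k : ℤ) → MeromorphicOn (c j) Set.univ) :
    (∀ t : Fin 4, ∀ g : ℂ → ℂ, memM τ η ν t g →
      memM τ η ν t (fun z => ∑ j ∈ Finset.Icc (-(k : ℤ)) (k : ℤ), c j z * g (z + (j : ℂ) * η)))
    ↔ Conds τ μ η k c := by
  exact ⟨conds_of_memM_map hτ hη hgen hμ hc, fun h _ _ hg => memM_map_of_conds hη hμ hc h hg⟩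
end
end
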